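/- arXiv:1409.8535 — 2 statements merged into one kernel-verified Lean document; each statement's English description precedes it below -/
import Mathlib

section
/- For every real K > 0 there exist constants c₁ > 0 and c₂ > 0, depending only on K, such that the following holds. If A ⊆ ℤ is a finite nonempty set with |A+A| ≤ K·|A|, then there exist a subset A' ⊆ A with |A'| ≥ c₁·|A| and an order-preserving Freiman 2-isomorphism φ : A' → [-c₂·|A'|, c₂·|A'|] ∩ ℤ. -/
open Pointwise

/-- `φ` is an order-preserving Freiman 2-isomorphism on the finite set `A ⊆ ℤ`:
it preserves order, and additive quadruples, in both directions. -/
def IsOrderPresFreiman2Iso (A : Finset ℤ) (φ : ℤ → ℤ) : Prop :=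
  (∀ a ∈ A, ∀ b ∈ A, (a < b ↔ φ a < φ b)) ∧
  (∀ a ∈ A, ∀ b ∈ A, ∀ c ∈ A, ∀ d ∈ A, (a + b = c + d ↔ φ a + φ b = φ c + φ d))

/-!
By Plünnecke's inequality `6A - 6A` has `O(|A|)` elements, so Ruzsa's model lemma maps a positive
proportion of `A` by a Freiman 6-isomorphism `ψ` into `ZMod N` with `N = O(|A|)`. By Bogolyubov's
argument `2ψ(A) - 2ψ(A)` contains a Bohr set with `O(1)` frequencies, whose elements are the short
vectors of a lattice. Transporting `ψ a + ψ b - ψ c - ψ d ↦ a + b - c - d` to this lattice gives an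
integer-valued function `f` that is additive on a ball. On a smaller ball `f` is proportional to a
linear functional, so the functionals `G` with `1 ≤ G u` whenever `0 < f u` form a nonempty
polyhedron. At a vertex of it, Cramer's rule expresses a multiple of `G` as an integral functional
whose values are sums of determinants of short vectors. Each determinant is the index of a
sublattice, hence at most the number of lattice points in a ball, hence at most `N`. The pigeonhole
principle restricts `A` to those elements whose lifts lie in one small cell, where the sign of
`a + b - c - d` is the sign of this functional.
-/

open Metric Module

/-! ### Maps additive on a ball -/

/-- A map between additive groups that is additive as far as `s` is closed under addition. -/
def IsAddHomOn {E F : Type*} [Add E] [Add F] (s : Set E) (f : E → F) : Prop :=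
  ∀ ⦃u⦄, u ∈ s → ∀ ⦃v⦄, v ∈ s → u + v ∈ s → f (u + v) = f u + f v

namespace IsAddHomOn

section Group

variable {E F G : Type*} [AddCommGroup E] [AddCommGroup F] [AddCommGroup G] {s : Set E} {f : E → F}

protected theorem map_zero (hf : IsAddHomOn s f) (h0 : 0 ∈ s) : f 0 = 0 := by
  simpa using hf h0 h0 (by simpa using h0)

protected theorem map_neg (hf : IsAddHomOn s f) (h0 : 0 ∈ s) {u : E} (hu : u ∈ s) (hu' : -u ∈ s) :
    f (-u) = -f u := by
  have h := hf hu hu' (by simpa using h0)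
  rw [add_neg_cancel, hf.map_zero h0] at h
  exact eq_neg_of_add_eq_zero_right h.symm

theorem comp_addMonoidHom {t : Set F} {g : F → G} (hg : IsAddHomOn t g) (π : E →+ F)
    (hπ : Set.MapsTo π s t) : IsAddHomOn s (g ∘ π) := fun u hu v hv huv ↦ by
  simpa using hg (hπ hu) (hπ hv) (by simpa using hπ huv)

end Group

variable {E F κ : Type*} [SeminormedAddCommGroup E] [AddCommGroup F] {f : E → F} {T : ℝ}

theorem map_add_sum (hf : IsAddHomOn (closedBall 0 T) f) (w : κ → E) (s : Finset κ) (z : E)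
    (h : ‖z‖ + ∑ i ∈ s, ‖w i‖ ≤ T) : f (z + ∑ i ∈ s, w i) = f z + ∑ i ∈ s, f (w i) := by
  classical
  induction s using Finset.induction_on with
  | empty => simp
  | insert a s ha ih =>
    rw [Finset.sum_insert ha] at h
    have hsum : ‖z + ∑ i ∈ s, w i‖ ≤ ‖z‖ + ∑ i ∈ s, ‖w i‖ :=
      norm_add_le_of_le le_rfl (norm_sum_le _ _)
    have hs : 0 ≤ ∑ i ∈ s, ‖w i‖ := Finset.sum_nonneg fun i _ ↦ norm_nonneg _
    have hadd := norm_add_le (z + ∑ i ∈ s, w i) (w a)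
    simp only [IsAddHomOn, mem_closedBall_zero_iff] at hf
    rw [Finset.sum_insert ha, Finset.sum_insert ha, add_left_comm, add_comm (w a),
      hf (by linarith [norm_nonneg (w a)]) (by linarith [norm_nonneg z]) (by linarith),
      ih (by linarith [norm_nonneg (w a)])]
    abel

variable [NormSMulClass ℤ E]

protected theorem map_zsmul (hf : IsAddHomOn (closedBall 0 T) f) (n : ℤ) (w : E)
    (h : |(n : ℝ)| * ‖w‖ ≤ T) : f (n • w) = n • f w := by
  have hT : 0 ≤ T := (by positivity : 0 ≤ |(n : ℝ)| * ‖w‖).trans h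
  have h0 : (0 : E) ∈ closedBall 0 T := by simpa using hT
  have hnat (m : ℕ) (hm : m * ‖w‖ ≤ T) : f ((m : ℤ) • w) = (m : ℤ) • f w := by
    have h := hf.map_add_sum (fun _ ↦ w) (Finset.range m) 0 (by simpa using hm)
    rw [Finset.sum_const, Finset.sum_const, hf.map_zero h0] at h
    simpa only [zero_add, Finset.card_range, natCast_zsmul] using h
  obtain ⟨m, rfl | rfl⟩ := n.eq_nat_or_neg
  · exact hnat m (by simpa using h)
  · have hm : m * ‖w‖ ≤ T := by simpa using h
    have hmem : (m : ℤ) • w ∈ closedBall 0 T := by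
      rwa [mem_closedBall_zero_iff, norm_smul, Int.norm_eq_abs, Int.cast_natCast, Nat.abs_cast]
    rw [neg_smul, neg_smul, hf.map_neg h0 hmem (by simpa using hmem), hnat m hm]

end IsAddHomOn

theorem abs_ediv_sub_ediv_le_one {a b d : ℤ} (hd : 0 < d) (h : |a - b| ≤ d) :
    |a / d - b / d| ≤ 1 := by
  have h' := abs_le.mp h
  have hab : a / d ≤ (b + 1 * d) / d := Int.ediv_le_ediv hd (by linarith)
  have hba : b / d ≤ (a + 1 * d) / d := Int.ediv_le_ediv hd (by linarith)
  rw [Int.add_mul_ediv_right _ _ hd.ne'] at hab hba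
  rw [abs_le]
  constructor <;> linarith

section Normed

variable {E F ι : Type*} [SeminormedAddCommGroup E] [NormSMulClass ℤ E] [Fintype ι]

theorem norm_sub_sum_ediv_smul_le {D : ℤ} (hD : D ≠ 0) {w : ι → E} {R : ℝ} (hw : ∀ i, ‖w i‖ ≤ R)
    {c : ι → ℤ} {x : E} (h : D • x = ∑ i, c i • w i) :
    ‖x - ∑ i, (c i / D) • w i‖ ≤ Fintype.card ι * R := by
  have hDpos : 0 < ‖D‖ := norm_pos_iff.mpr hD
  refine le_of_mul_le_mul_left ?_ hDpos
  calc ‖D‖ * ‖x - ∑ i, (c i / D) • w i‖ = ‖∑ i, (c i % D) • w i‖ := by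
        rw [← norm_smul, smul_sub, h, Finset.smul_sum, ← Finset.sum_sub_distrib]
        simp only [smul_smul, ← sub_smul, Int.emod_def]
    _ ≤ ∑ _i : ι, ‖D‖ * R := norm_sum_le_of_le _ fun i _ ↦ by
        rw [norm_smul]
        gcongr
        · rw [Int.norm_eq_abs, Int.norm_eq_abs]
          have h := Int.emod_lt_abs (c i) hD
          rw [← abs_of_nonneg (Int.emod_nonneg (c i) hD)] at h
          exact_mod_cast h.le
        · exact hw i
    _ = ‖D‖ * (Fintype.card ι * R) := by simp; ring

variable [AddCommGroup F] {f : E → F} {R T : ℝ} {w : ι → E} {y : E} {D : ℤ} {n : ι → ℤ}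

-- Walk from `0` to `D • y` in steps of `y`, each time subtracting the nearby combination of the
-- `w i`: the quotients change by at most one per step, so the walk stays in the ball.
theorem IsAddHomOn.map_smul_sub_sum_ediv_smul (hf : IsAddHomOn (closedBall 0 T) f)
    (hT : (2 * Fintype.card ι + 1) * R ≤ T) (hw : ∀ i, ‖w i‖ ≤ R) (hy : ‖y‖ ≤ R) (hD : 0 < D)
    (hn : ∀ i, |n i| ≤ D) (h : D • y = ∑ i, n i • w i) (t : ℕ) :
    f ((t : ℤ) • y - ∑ i, (t * n i / D) • w i) =
      (t : ℤ) • f y - ∑ i, (t * n i / D) • f (w i) := by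
  set k : ℝ := (Fintype.card ι : ℝ)
  have hR : 0 ≤ R := (norm_nonneg y).trans hy
  have hk : 0 ≤ k * R := by positivity
  induction t with
  | zero => simp [hf.map_zero (by simp; linarith)]
  | succ t ih =>
    set z : E := (t : ℤ) • y - ∑ i, (t * n i / D) • w i with hz
    have hz_norm : ‖z‖ ≤ k * R := by
      refine norm_sub_sum_ediv_smul_le hD.ne' hw ?_
      simp only [smul_comm D, h, Finset.smul_sum, smul_smul]
    obtain ⟨δ, hδ⟩ : ∃ δ : ι → ℤ, ∀ i, (t + 1) * n i / D = t * n i / D - δ i :=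
      ⟨fun i ↦ t * n i / D - (t + 1) * n i / D, fun i ↦ by simp⟩
    have hδ_abs (i : ι) : |(δ i : ℝ)| ≤ 1 := by
      have : |t * n i / D - (t + 1) * n i / D| ≤ 1 := abs_ediv_sub_ediv_le_one hD (by
        simpa [← sub_mul] using hn i)
      rw [hδ, sub_sub_cancel] at this
      exact_mod_cast this
    have hδw (i : ι) : |(δ i : ℝ)| * ‖w i‖ ≤ R :=
      (mul_le_of_le_one_left (norm_nonneg _) (hδ_abs i)).trans (hw i)
    have hδ_map (i : ι) : f (δ i • w i) = δ i • f (w i) :=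
      hf.map_zsmul _ _ ((hδw i).trans (by linarith))
    have hsum : ∑ i, ‖δ i • w i‖ ≤ k * R := by
      simpa [norm_smul, Int.norm_eq_abs, k] using
        Finset.sum_le_sum fun i (_ : i ∈ Finset.univ) ↦ hδw i
    have hzy : ‖z + y‖ ≤ k * R + R := norm_add_le_of_le hz_norm hy
    have hmap_add : f (z + y) = f z + f y := by
      refine hf ?_ ?_ ?_ <;> rw [mem_closedBall_zero_iff] <;> linarith
    have hstep : ((t : ℤ) + 1) • y - ∑ i, ((t + 1) * n i / D) • w i =
        (z + y) + ∑ i, δ i • w i := by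
      simp only [hδ, hz, sub_smul, Finset.sum_sub_distrib, add_smul, one_smul]
      abel
    rw [Nat.cast_succ, hstep, hf.map_add_sum _ _ _ (by linarith), hmap_add, ih]
    simp only [hδ_map, hδ, sub_smul, Finset.sum_sub_distrib, add_smul, one_smul]
    abel

theorem IsAddHomOn.smul_map_eq_sum (hf : IsAddHomOn (closedBall 0 T) f)
    (hT : (2 * Fintype.card ι + 1) * R ≤ T) (hw : ∀ i, ‖w i‖ ≤ R) (hy : ‖y‖ ≤ R) (hD : 0 < D)
    (hn : ∀ i, |n i| ≤ D) (h : D • y = ∑ i, n i • w i) : D • f y = ∑ i, n i • f (w i) := by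
  have hR : 0 ≤ R := (norm_nonneg y).trans hy
  have hT0 : 0 ≤ T := le_trans (by positivity) hT
  lift D to ℕ using hD.le
  have hquot (i : ι) : (D * n i) / (D : ℤ) = n i := Int.mul_ediv_cancel_left _ hD.ne'
  have hmap := hf.map_smul_sub_sum_ediv_smul hT hw hy hD hn h D
  simp only [hquot] at hmap
  rw [h, sub_self, hf.map_zero (by simpa using hT0)] at hmap
  exact sub_eq_zero.mp hmap.symm

end Normed

/-! ### Cramer's rule and determinants of short vectors -/

section CramerRule

variable {R M N ι : Type*} [CommRing R] [AddCommGroup M] [Module R M] [AddCommGroup N] [Module R N]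
  [Fintype ι] [DecidableEq ι]

/-- The numerator in Cramer's rule: if `g (w i) = c i` for a linear map `g`, then
`b.det w • g = cramerMap b w c`. -/
noncomputable def cramerMap (b : Basis ι R M) (w : ι → M) (c : ι → N) : M →ₗ[R] N :=
  ∑ i, (b.det.toMultilinearMap.toLinearMap w i).smulRight (c i)

@[simp]
theorem cramerMap_apply (b : Basis ι R M) (w : ι → M) (c : ι → N) (x : M) :
    cramerMap b w c x = ∑ i, b.det (Function.update w i x) • c i := by
  simp [cramerMap]

theorem det_smul_eq_sum_det_update_smul (b : Basis ι R M) (w : ι → M) (x : M) :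
    b.det w • x = ∑ i, b.det (Function.update w i x) • w i := by
  refine b.ext_elem fun j ↦ ?_
  have h := congrFun (Matrix.mulVec_cramer (b.toMatrix w) (b.repr x)) j
  simp only [Matrix.mulVec, dotProduct, Matrix.cramer_apply, ← Basis.toMatrix_update,
    ← Basis.det_apply, Pi.smul_apply, Basis.toMatrix_apply] at h
  simpa [mul_comm] using h.symm

theorem det_smul_map_eq_cramerMap (b : Basis ι R M) (w : ι → M) (g : M →ₗ[R] N) (x : M) :
    b.det w • g x = cramerMap b w (g ∘ w) x := by
  rw [← map_smul, det_smul_eq_sum_det_update_smul, map_sum, cramerMap_apply]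
  simp only [map_smul, Function.comp_apply]

end CramerRule

theorem exists_forall_mem_multilinearMap_ne_zero {R M N ι : Type*} [Semiring R] [AddCommMonoid M]
    [Module R M] [AddCommMonoid N] [Module R N] [Finite ι]
    {D : MultilinearMap R (fun _ : ι ↦ M) N} (hD : D ≠ 0) {S : Set M}
    (hS : ∀ l : M →ₗ[R] N, (∀ x ∈ S, l x = 0) → l = 0) :
    ∃ y : ι → M, (∀ i, y i ∈ S) ∧ D y ≠ 0 := by
  classical
  have := Fintype.ofFinite ι
  suffices h : ∀ s : Finset ι, ∃ y : ι → M, (∀ i ∈ s, y i ∈ S) ∧ D y ≠ 0 by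
    simpa using h Finset.univ
  intro s
  induction s using Finset.induction_on with
  | empty => simpa [MultilinearMap.ext_iff] using hD
  | insert a s ha ih =>
    obtain ⟨y, hyS, hy⟩ := ih
    have hl : D.toLinearMap y a ≠ 0 := fun h ↦ hy (by simpa using congr($h (y a)))
    obtain ⟨x, hxS, hx⟩ : ∃ x ∈ S, D.toLinearMap y a x ≠ 0 := by
      contrapose! hl
      exact hS _ hl
    refine ⟨Function.update y a x, fun i hi ↦ ?_, hx⟩
    obtain rfl | hia := eq_or_ne i a
    · simpa using hxS
    · simpa [hia] using hyS i (Finset.mem_of_mem_insert_of_ne hi hia)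

-- `|b.det w|` is the index of the span of `w`, and every coset meets the ball.
theorem abs_det_le_ncard_closedBall {E ι : Type*} [SeminormedAddCommGroup E] [NormSMulClass ℤ E]
    [Fintype ι] [DecidableEq ι] (b : Basis ι ℤ E) {w : ι → E} {R : ℝ} (hw : ∀ i, ‖w i‖ ≤ R)
    (hfin : (closedBall (0 : E) (Fintype.card ι * R)).Finite) :
    |b.det w| ≤ (closedBall (0 : E) (Fintype.card ι * R)).ncard := by
  have := Free.of_basis b
  have := Module.Finite.of_basis b
  by_cases hD : b.det w = 0
  · simp [hD]
  have hli : LinearIndependent ℤ w := by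
    by_contra h
    exact hD (b.det.map_linearDependent w h)
  set L := Submodule.span ℤ (Set.range w)
  have hindex : (b.det w).natAbs = Nat.card (E ⧸ L) := by
    have hspan : ((↑) : L → E) ∘ Basis.span hli = w := by ext1 i; simp [L, Basis.span_apply]
    rw [← Submodule.natAbs_det_basis_change b L (Basis.span hli), hspan]
  have hsurj : Function.Surjective fun u : closedBall (0 : E) (Fintype.card ι * R) ↦
      L.mkQ (u : E) := by
    intro q
    obtain ⟨x, rfl⟩ := L.mkQ_surjective q
    refine ⟨⟨x - ∑ i, (b.det (Function.update w i x) / b.det w) • w i, ?_⟩, ?_⟩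
    · rw [mem_closedBall_zero_iff]
      exact norm_sub_sum_ediv_smul_le hD hw (det_smul_eq_sum_det_update_smul b w x)
    · simpa using L.sum_mem fun i _ ↦ L.smul_mem _ (Submodule.subset_span (Set.mem_range_self i))
  have := hfin.to_subtype
  rw [Int.abs_eq_natAbs, hindex, ← Nat.card_coe_set_eq]
  exact_mod_cast Nat.card_le_card_of_surjective _ hsurj

/-! ### Vertices of polyhedra -/

section Vertex

variable {𝕜 V ι : Type*} [Field 𝕜] [LinearOrder 𝕜] [IsStrictOrderedRing 𝕜] [AddCommGroup V]
  [Module 𝕜 V] [Finite ι] {φ : ι → V →ₗ[𝕜] 𝕜} {c : ι → 𝕜}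

-- Move from `v` in the direction `w` until the first of the constraints not yet tight becomes so.
theorem exists_feasible_tight_ssubset {v w : V} (hv : ∀ i, c i ≤ φ i v)
    (hw : ∀ i, φ i v = c i → φ i w = 0) (hneg : ∃ i, φ i w < 0) :
    ∃ v', (∀ i, c i ≤ φ i v') ∧ {i | φ i v = c i} ⊂ {i | φ i v' = c i} := by
  obtain ⟨i₀, hi₀, hmin⟩ := Set.exists_min_image {i | φ i w < 0}
    (fun i ↦ (φ i v - c i) / -φ i w) (Set.toFinite _) hneg
  set t := (φ i₀ v - c i₀) / -φ i₀ w
  rw [Set.mem_ofPred_eq] at hi₀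
  have ht : 0 ≤ t := div_nonneg (sub_nonneg.mpr (hv i₀)) (by linarith)
  have hmap (i : ι) : φ i (v + t • w) = φ i v + t * φ i w := by simp
  refine ⟨v + t • w, fun i ↦ ?_, fun i hi ↦ ?_, fun h ↦ hi₀.ne (hw i₀ (h ?_))⟩
  · rw [hmap]
    obtain hi | hi := lt_or_ge (φ i w) 0
    · have := (le_div_iff₀ (by linarith)).mp (hmin i hi)
      linarith
    · linarith [hv i, mul_nonneg ht hi]
  · rw [Set.mem_ofPred_eq] at hi ⊢
    rw [hmap, hw i hi, hi, mul_zero, add_zero]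
  · have : t * -φ i₀ w = φ i₀ v - c i₀ := div_mul_cancel₀ _ (by linarith)
    rw [Set.mem_ofPred_eq, hmap]
    linarith

theorem exists_feasible_forall_eq_zero_of_tight (h : ∃ v, ∀ i, c i ≤ φ i v) :
    ∃ v, (∀ i, c i ≤ φ i v) ∧
      ∀ w, (∀ i, φ i v = c i → φ i w = 0) → ∀ i, φ i w = 0 := by
  obtain ⟨v₀, hv₀⟩ := h
  obtain ⟨s, ⟨v, hv, rfl⟩, hmax⟩ :=
    (Set.toFinite {s | ∃ v, (∀ i, c i ≤ φ i v) ∧ {i | φ i v = c i} = s}).exists_maximal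
      ⟨_, v₀, hv₀, rfl⟩
  have hnonneg (w : V) (hw : ∀ i, φ i v = c i → φ i w = 0) (i : ι) : 0 ≤ φ i w := by
    by_contra! hneg
    obtain ⟨v', hv', hlt⟩ := exists_feasible_tight_ssubset hv hw ⟨i, hneg⟩
    exact hlt.not_subset (hmax ⟨v', hv', rfl⟩ hlt.subset)
  refine ⟨v, hv, fun w hw i ↦ (hnonneg w hw i).antisymm' ?_⟩
  simpa using hnonneg (-w) (fun j hj ↦ by simp [hw j hj]) i

end Vertex

theorem exists_linearMap_pos_abs_le_sum_det {E ι : Type*} [AddCommGroup E] [Fintype ι]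
    [DecidableEq ι] (b : Basis ι ℤ E) {P : Set E} (hP : P.Finite)
    (hdet : ∀ l : E →ₗ[ℤ] ℚ, (∀ x ∈ P, l x = 0) → l = 0) {F : E →ₗ[ℤ] ℤ} (hF : ∀ x ∈ P, 0 < F x) :
    ∃ (y : ι → E) (G : E →ₗ[ℤ] ℤ), (∀ i, y i ∈ P) ∧ (∀ x ∈ P, 0 < G x) ∧
      ∀ x, |G x| ≤ ∑ i, |b.det (Function.update y i x)| := by
  have := hP.to_subtype
  let ev (x : P) : (E →ₗ[ℤ] ℚ) →ₗ[ℚ] ℚ := LinearMap.applyₗ' ℚ (x : E)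
  obtain ⟨v, hv, htight⟩ := exists_feasible_forall_eq_zero_of_tight (φ := ev) (c := 1)
    ⟨(Int.castAddHom ℚ).toIntLinearMap ∘ₗ F, fun x ↦ by
      have : 1 ≤ F x := hF x x.2
      simpa [ev] using mod_cast this⟩
  obtain ⟨y, hy, hdety⟩ := exists_forall_mem_multilinearMap_ne_zero (S := {x ∈ P | v x = 1})
    (D := (Int.castAddHom ℚ).toIntLinearMap.compMultilinearMap b.det.toMultilinearMap)
    (fun h ↦ by simpa [b.det_self] using congr($h b))
    (fun l hl ↦ hdet l fun x hx ↦ htight l (fun z hz ↦ hl z ⟨z.2, hz⟩) ⟨x, hx⟩)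
  have hD : b.det y ≠ 0 := by simpa using hdety
  have hcramer (x : E) : (b.det y : ℚ) * v x = cramerMap b y (1 : ι → ℤ) x := by
    have h := det_smul_map_eq_cramerMap b y v x
    simpa [(hy _).2] using h
  refine ⟨y, (b.det y).sign • cramerMap b y 1, fun i ↦ (hy i).1, fun x hx ↦ ?_, fun x ↦ ?_⟩
  · have hvx : 0 < v x := zero_lt_one.trans_le (hv ⟨x, hx⟩)
    have habs : (0 : ℚ) < |b.det y| * v x := by positivity
    rw [← Int.sign_mul_self_eq_abs, Int.cast_mul, mul_assoc, hcramer] at habs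
    exact_mod_cast habs
  · have habs : |((b.det y).sign • cramerMap b y (1 : ι → ℤ)) x| =
        |∑ i, b.det (Function.update y i x)| := by
      simp [abs_mul, Int.abs_sign_of_ne_zero hD]
    exact habs.trans_le (Finset.abs_sum_le_sum_abs _ _)

/-! ### Linear functionals from maps additive on a ball -/

namespace IsAddHomOn

variable {E F ι : Type*} [SeminormedAddCommGroup E] [NormSMulClass ℤ E] {R T : ℝ}

-- When `|b.det w|` is maximal, Cramer's rule writes `|b.det w| • u` as a combination of the `w i`
-- with coefficients at most `|b.det w|`.
theorem exists_linearMap_eq_smul [AddCommGroup F] [Fintype ι] {f : E → F}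
    (hf : IsAddHomOn (closedBall 0 T) f) (b : Basis ι ℤ E)
    (hfin : (closedBall (0 : E) R).Finite) (hspan : Submodule.span ℤ (closedBall (0 : E) R) = ⊤)
    (hT : (2 * Fintype.card ι + 1) * R ≤ T) :
    ∃ D : ℤ, 0 < D ∧ ∃ L : E →ₗ[ℤ] F, ∀ u, ‖u‖ ≤ R → L u = D • f u := by
  classical
  obtain ⟨y, hy, hydet⟩ := exists_forall_mem_multilinearMap_ne_zero
    (D := b.det.toMultilinearMap) (S := closedBall (0 : E) R)
    (fun h ↦ by simpa [b.det_self] using congr($h b))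
    fun l hl ↦ LinearMap.ext_on hspan fun x hx ↦ by simpa using hl x hx
  obtain ⟨w, hw, hmax⟩ := Set.exists_max_image {w : ι → E | ∀ i, w i ∈ closedBall (0 : E) R}
    (fun w ↦ |b.det w|) (Set.Finite.pi' fun _ ↦ hfin) ⟨y, hy⟩
  have hdet : b.det w ≠ 0 := abs_pos.mp ((abs_pos.mpr hydet).trans_le (hmax y hy))
  set ε := (b.det w).sign
  have hε : ε * b.det w = |b.det w| := Int.sign_mul_self_eq_abs _
  refine ⟨|b.det w|, abs_pos.mpr hdet, ε • cramerMap b w (f ∘ w), fun u hu ↦ ?_⟩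
  have hcoeff (i : ι) : |ε * b.det (Function.update w i u)| ≤ |b.det w| := by
    rw [abs_mul, Int.abs_sign_of_ne_zero hdet, one_mul]
    refine hmax _ (Function.forall_update_iff w _ |>.mpr ⟨?_, fun j _ ↦ hw j⟩)
    rwa [mem_closedBall_zero_iff]
  have hcramer : |b.det w| • u = ∑ i, (ε * b.det (Function.update w i u)) • w i := by
    rw [← hε, mul_smul, det_smul_eq_sum_det_update_smul, Finset.smul_sum]
    simp only [mul_smul]
  rw [hf.smul_map_eq_sum hT (fun i ↦ mem_closedBall_zero_iff.mp (hw i)) hu (abs_pos.mpr hdet)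
    hcoeff hcramer]
  simp [Finset.smul_sum, mul_smul]

variable {f : E → ℤ}

theorem exists_linearMap_pos_of_span_eq_top [Fintype ι] (hf : IsAddHomOn (closedBall 0 T) f)
    (hker : ∀ u ∈ closedBall 0 T, f u = 0 → u = 0) (hfin : (closedBall (0 : E) T).Finite)
    (b : Basis ι ℤ E) (hR : 0 ≤ R) (hspan : Submodule.span ℤ (closedBall (0 : E) R) = ⊤)
    (hT : (2 * Fintype.card ι + 1) * R ≤ T) :
    ∃ G : E →ₗ[ℤ] ℤ, ∀ u, ‖u‖ ≤ R →
      (0 < f u → 0 < G u) ∧ |G u| ≤ Fintype.card ι * (closedBall (0 : E) T).ncard := by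
  classical
  have hkR : 0 ≤ Fintype.card ι * R := by positivity
  have hRT : closedBall (0 : E) R ⊆ closedBall 0 T := closedBall_subset_closedBall (by linarith)
  have hkRT : closedBall (0 : E) (Fintype.card ι * R) ⊆ closedBall 0 T :=
    closedBall_subset_closedBall (by linarith)
  have h0 : (0 : E) ∈ closedBall 0 T := hRT (by simpa using hR)
  obtain ⟨D, hD, L, hL⟩ := hf.exists_linearMap_eq_smul b (hfin.subset hRT) hspan hT
  have hdet (l : E →ₗ[ℤ] ℚ) (hl : ∀ u ∈ {u ∈ closedBall 0 R | 0 < f u}, l u = 0) : l = 0 := by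
    refine LinearMap.ext_on hspan fun u hu ↦ ?_
    rw [LinearMap.zero_apply]
    obtain hneg | hzero | hpos := lt_trichotomy (f u) 0
    · have hu' : -u ∈ closedBall 0 R := by simpa using hu
      have := hl (-u) ⟨hu', by rw [hf.map_neg h0 (hRT hu) (hRT hu')]; omega⟩
      simpa using this
    · simp [hker u (hRT hu) hzero]
    · exact hl u ⟨hu, hpos⟩
  obtain ⟨y, G, hy, hGpos, hGle⟩ := exists_linearMap_pos_abs_le_sum_det b
    ((hfin.subset hRT).subset (Set.sep_subset _ _)) hdet (F := L) fun u hu ↦ by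
      rw [hL u (by simpa using hu.1)]
      exact mul_pos hD hu.2
  refine ⟨G, fun u hu ↦ ⟨fun hfu ↦ hGpos u ⟨by simpa using hu, hfu⟩, (hGle u).trans ?_⟩⟩
  have hdet_le (i : ι) : |b.det (Function.update y i u)| ≤ (closedBall (0 : E) T).ncard := by
    have hle : ∀ j, ‖Function.update y i u j‖ ≤ R :=
      (Function.forall_update_iff y fun _ v ↦ ‖v‖ ≤ R).mpr ⟨hu, fun j _ ↦ by simpa using (hy j).1⟩
    exact (abs_det_le_ncard_closedBall b hle (hfin.subset hkRT)).trans
      (mod_cast Set.ncard_le_ncard hkRT hfin)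
  simpa using Finset.sum_le_card_nsmul Finset.univ _ _ fun i _ ↦ hdet_le i

theorem exists_linearMap_pos [Free ℤ E] [Module.Finite ℤ E] (hf : IsAddHomOn (closedBall 0 T) f)
    (hker : ∀ u ∈ closedBall 0 T, f u = 0 → u = 0) (hfin : (closedBall (0 : E) T).Finite)
    (hR : 0 ≤ R) (hT : (2 * finrank ℤ E + 1) * R ≤ T) :
    ∃ G : Submodule.span ℤ (closedBall (0 : E) R) →ₗ[ℤ] ℤ,
      ∀ u : Submodule.span ℤ (closedBall (0 : E) R), ‖u‖ ≤ R →
        (0 < f u → 0 < G u) ∧ |G u| ≤ finrank ℤ E * (closedBall (0 : E) T).ncard := by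
  set H := Submodule.span ℤ (closedBall (0 : E) R)
  have : NormSMulClass ℤ H := ⟨fun n u ↦ norm_smul n (u : E)⟩
  have hmaps : Set.MapsTo H.subtype (closedBall 0 T) (closedBall 0 T) := fun u hu ↦ by
    simpa using hu
  have hrank : finrank ℤ H ≤ finrank ℤ E := H.finrank_le
  have hcard : Fintype.card (Free.ChooseBasisIndex ℤ H) = finrank ℤ H :=
    (finrank_eq_card_chooseBasisIndex ℤ H).symm
  have hspan : Submodule.span ℤ (closedBall (0 : H) R) = ⊤ := by
    have : ((↑) : H → E) ⁻¹' closedBall 0 R = closedBall 0 R := by ext; simp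
    rw [← this]
    exact Submodule.span_span_coe_preimage
  have hfinH : (closedBall (0 : H) T).Finite := hfin.of_injOn hmaps Subtype.val_injective.injOn
  obtain ⟨G, hG⟩ := (hf.comp_addMonoidHom H.subtype.toAddMonoidHom
    hmaps).exists_linearMap_pos_of_span_eq_top
    (fun u hu hfu ↦ Subtype.ext (hker u (hmaps hu) hfu)) hfinH (Free.chooseBasis ℤ H) hR
    hspan (by rw [hcard]; exact le_trans (by gcongr) hT)
  refine ⟨G, fun u hu ↦ ⟨(hG u hu).1, (hG u hu).2.trans ?_⟩⟩
  rw [hcard]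
  gcongr
  exact Set.ncard_le_ncard_of_injOn _ hmaps Subtype.val_injective.injOn hfin

end IsAddHomOn

theorem isOrderPresFreiman2Iso_of_add_lt_add {A : Finset ℤ} {φ : ℤ → ℤ}
    (hlt : ∀ a ∈ A, ∀ b ∈ A, ∀ c ∈ A, ∀ d ∈ A, a + b < c + d → φ a + φ b < φ c + φ d)
    (heq : ∀ a ∈ A, ∀ b ∈ A, ∀ c ∈ A, ∀ d ∈ A, a + b = c + d → φ a + φ b = φ c + φ d) :
    IsOrderPresFreiman2Iso A φ := by
  have hmono : ∀ a ∈ A, ∀ b ∈ A, a < b → φ a < φ b := fun a ha b hb hab ↦ by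
    simpa using hlt a ha a ha b hb a ha (by simpa using hab)
  refine ⟨fun a ha b hb ↦ ⟨hmono a ha b hb, fun h ↦ ?_⟩,
    fun a ha b hb c hc d hd ↦ ⟨heq a ha b hb c hc d hd, fun h ↦ ?_⟩⟩
  · obtain hab | rfl | hba := lt_trichotomy a b
    · exact hab
    · exact absurd h (lt_irrefl _)
    · exact absurd h (hmono b hb a ha hba).asymm
  · obtain hab | hab | hba := lt_trichotomy (a + b) (c + d)
    · exact absurd h (hlt a ha b hb c hc d hd hab).ne
    · exact hab
    · exact absurd h (hlt c hc d hd a ha b hb hba).ne'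

theorem IsAddHomOn.exists_isOrderPresFreiman2Iso {E : Type*} [SeminormedAddCommGroup E]
    [NormSMulClass ℤ E] [Free ℤ E] [Module.Finite ℤ E] {R T : ℝ} {f : E → ℤ}
    (hf : IsAddHomOn (closedBall 0 T) f) (hker : ∀ u ∈ closedBall 0 T, f u = 0 → u = 0)
    (hfin : (closedBall (0 : E) T).Finite) (hR : 0 ≤ R) (hT : (2 * finrank ℤ E + 1) * R ≤ T)
    {A : Finset ℤ} {Y : ℤ → E} (hY : ∀ a ∈ A, ∀ b ∈ A, ‖Y a - Y b‖ ≤ R / 2)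
    (hfY : ∀ a ∈ A, ∀ b ∈ A, ∀ c ∈ A, ∀ d ∈ A, f (Y a + Y b - Y c - Y d) = a + b - c - d) :
    ∃ φ : ℤ → ℤ, IsOrderPresFreiman2Iso A φ ∧
      ∀ a ∈ A, |φ a| ≤ finrank ℤ E * (closedBall (0 : E) T).ncard := by
  obtain rfl | ⟨a₀, ha₀⟩ := A.eq_empty_or_nonempty
  · exact ⟨0, by simp [IsOrderPresFreiman2Iso], by simp⟩
  obtain ⟨G, hG⟩ := hf.exists_linearMap_pos hker hfin hR hT
  have hRT : R ≤ T := by nlinarith [(finrank ℤ E).cast_nonneg (α := ℝ)]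
  choose! v hv using fun a (ha : a ∈ A) ↦
    (⟨⟨Y a - Y a₀, Submodule.subset_span (by
      rw [mem_closedBall_zero_iff]; linarith [hY a ha a₀ ha₀])⟩, rfl⟩ :
      ∃ v : Submodule.span ℤ (closedBall (0 : E) R), (v : E) = Y a - Y a₀)
  have hcoe : ∀ a ∈ A, ∀ b ∈ A, ∀ c ∈ A, ∀ d ∈ A,
      ‖v a + v b - v c - v d‖ ≤ R ∧ f ↑(v a + v b - v c - v d) = a + b - c - d := by
    intro a ha b hb c hc d hd
    have hu : ((v a + v b - v c - v d : Submodule.span ℤ (closedBall (0 : E) R)) : E) =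
        Y a + Y b - Y c - Y d := by
      push_cast
      rw [hv a ha, hv b hb, hv c hc, hv d hd]
      abel
    have hle := norm_add_le_of_le (hY a ha c hc) (hY b hb d hd)
    rw [add_halves, sub_add_sub_comm, ← sub_sub] at hle
    rw [Submodule.coe_norm, hu]
    exact ⟨hle, hfY a ha b hb c hc d hd⟩
  refine ⟨fun a ↦ G (v a), isOrderPresFreiman2Iso_of_add_lt_add ?_ ?_, fun a ha ↦ ?_⟩
  · intro a ha b hb c hc d hd hlt
    obtain ⟨hle, hfu⟩ := hcoe c hc d hd a ha b hb
    have hpos := (hG _ hle).1 (by linarith)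
    simp only [map_sub, map_add] at hpos
    linarith
  · intro a ha b hb c hc d hd heq
    obtain ⟨hle, hfu⟩ := hcoe a ha b hb c hc d hd
    have hzero : v a + v b - v c - v d = 0 :=
      Subtype.ext (hker _ (by simpa using hle.trans hRT) (by linarith))
    have hGzero := congr(G $hzero)
    simp only [map_sub, map_add, map_zero] at hGzero
    linarith
  · refine (hG (v a) ?_).2
    rw [Submodule.coe_norm, hv a ha]
    linarith [hY a ha a₀ ha₀]

/-! ### Bogolyubov's argument -/

section Bogolyubov

variable {G : Type*} [AddCommGroup G]

/-- The Fourier coefficient of the indicator function of `S` at the character `-χ`, without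
normalisation. -/
noncomputable def charSum (S : Finset G) (χ : AddChar G ℂ) : ℂ := ∑ a ∈ S, χ a

theorem charSum_zero (S : Finset G) : charSum S 0 = S.card := by
  simp [charSum]

theorem norm_charSum_sq [Finite G] (S : Finset G) (χ : AddChar G ℂ) :
    ((‖charSum S χ‖ ^ 2 : ℝ) : ℂ) = ∑ a ∈ S, ∑ b ∈ S, χ (a - b) := by
  rw [Complex.ofReal_pow, ← Complex.mul_conj', charSum, map_sum, Finset.sum_mul_sum]
  simp only [sub_eq_add_neg, AddChar.map_add_eq_mul, AddChar.map_neg_eq_conj]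

theorem sum_norm_charSum_pow_four_mul_re [Finite G] [DecidableEq G] {S : Finset G} {x : G}
    (hx : x ∉ S + S - S - S) :
    ∑ χ : AddChar G ℂ, ‖charSum S χ‖ ^ 4 * (χ x).re = 0 := by
  have := Fintype.ofFinite G
  have hterm (χ : AddChar G ℂ) : ((‖charSum S χ‖ ^ 4 : ℝ) : ℂ) * χ x =
      ∑ c ∈ S, ∑ a ∈ S, ∑ d ∈ S, ∑ b ∈ S, χ (d - b + (c - a) + x) := by
    rw [show ‖charSum S χ‖ ^ 4 = ‖charSum S χ‖ ^ 2 * ‖charSum S χ‖ ^ 2 by ring,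
      Complex.ofReal_mul, norm_charSum_sq]
    simp only [AddChar.map_add_eq_mul, Finset.sum_mul, Finset.mul_sum]
  suffices h : ∑ χ : AddChar G ℂ, ((‖charSum S χ‖ ^ 4 : ℝ) : ℂ) * χ x = 0 by
    simpa only [Complex.re_sum, Complex.re_ofReal_mul, Complex.zero_re] using congr(($h).re)
  simp_rw [hterm]
  rw [Finset.sum_comm]
  refine Finset.sum_eq_zero fun c hc ↦ ?_
  rw [Finset.sum_comm]
  refine Finset.sum_eq_zero fun a ha ↦ ?_
  rw [Finset.sum_comm]
  refine Finset.sum_eq_zero fun d hd ↦ ?_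
  rw [Finset.sum_comm]
  refine Finset.sum_eq_zero fun b hb ↦ ?_
  rw [AddChar.sum_apply_eq_ite, if_neg]
  intro h
  refine hx ?_
  have : x = a + b - c - d := by rw [← sub_eq_zero, ← h]; abel
  rw [this]
  exact Finset.sub_mem_sub (Finset.sub_mem_sub (Finset.add_mem_add ha hb) hc) hd

variable [Fintype G]

theorem sum_norm_charSum_sq (S : Finset G) :
    ∑ χ : AddChar G ℂ, ‖charSum S χ‖ ^ 2 = Fintype.card G * S.card := by
  classical
  suffices h : ((∑ χ : AddChar G ℂ, ‖charSum S χ‖ ^ 2 : ℝ) : ℂ) = Fintype.card G * S.card from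
    mod_cast h
  rw [Complex.ofReal_sum]
  simp_rw [norm_charSum_sq]
  rw [Finset.sum_comm]
  simp_rw [Finset.sum_comm (s := Finset.univ), AddChar.sum_apply_eq_ite, sub_eq_zero]
  simp [mul_comm]

/-- The characters at which `charSum S` is large, with Bogolyubov's threshold. -/
noncomputable def largeSpectrum (S : Finset G) : Finset (AddChar G ℂ) :=
  {χ | (S.card : ℝ) ^ 3 / Fintype.card G ≤ ‖charSum S χ‖ ^ 2}

theorem card_largeSpectrum_mul_sq_le {S : Finset G} (hS : S.Nonempty) :
    ((largeSpectrum S).card : ℝ) * S.card ^ 2 ≤ Fintype.card G ^ 2 := by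
  have hS' : (0 : ℝ) < S.card := mod_cast hS.card_pos
  have hG : (0 : ℝ) < Fintype.card G := by
    have : Nonempty G := ⟨0⟩
    exact_mod_cast Fintype.card_pos
  have h : ((largeSpectrum S).card : ℝ) * (S.card ^ 3 / Fintype.card G) ≤
      Fintype.card G * S.card := by
    rw [← sum_norm_charSum_sq, ← nsmul_eq_mul]
    exact (Finset.card_nsmul_le_sum _ _ _ fun χ hχ ↦ by simpa [largeSpectrum] using hχ).trans
      (Finset.sum_le_univ_sum_of_nonneg fun χ ↦ by positivity)
  rw [← mul_div_assoc, div_le_iff₀ hG] at h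
  exact le_of_mul_le_mul_right (by linarith) hS'

theorem mem_add_sub_sub_of_forall_largeSpectrum [DecidableEq G] {S : Finset G} (hS : S.Nonempty)
    {x : G} (hx : ∀ χ ∈ largeSpectrum S, 0 ≤ (χ x).re) : x ∈ S + S - S - S := by
  classical
  by_contra hmem
  set s := (S.card : ℝ)
  set n := (Fintype.card G : ℝ)
  have hs : 0 < s := Nat.cast_pos.mpr hS.card_pos
  have hn : 0 < n := Nat.cast_pos.mpr (Fintype.card_pos_iff.mpr ⟨0⟩)
  have hlower (χ : AddChar G ℂ) :
      -(s ^ 3 / n * ‖charSum S χ‖ ^ 2) ≤ ‖charSum S χ‖ ^ 4 * (χ x).re := by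
    by_cases hχ : χ ∈ largeSpectrum S
    · exact (neg_nonpos.mpr (by positivity)).trans (mul_nonneg (by positivity) (hx χ hχ))
    · have hsmall : ‖charSum S χ‖ ^ 2 ≤ s ^ 3 / n := by
        simpa [largeSpectrum] using (not_le.mp (by simpa [largeSpectrum] using hχ)).le
      have hre : -1 ≤ (χ x).re := by
        have := Complex.abs_re_le_norm (χ x)
        rw [AddChar.norm_apply] at this
        exact (abs_le.mp this).1
      calc -(s ^ 3 / n * ‖charSum S χ‖ ^ 2)
          ≤ -(‖charSum S χ‖ ^ 2 * ‖charSum S χ‖ ^ 2) := by gcongr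
        _ = ‖charSum S χ‖ ^ 4 * -1 := by ring
        _ ≤ ‖charSum S χ‖ ^ 4 * (χ x).re := by gcongr
  have hsum := Finset.sum_le_sum fun χ (_ : χ ∈ Finset.univ.erase (0 : AddChar G ℂ)) ↦ hlower χ
  rw [Finset.sum_neg_distrib, ← Finset.mul_sum,
    Finset.sum_erase_eq_sub (Finset.mem_univ _), Finset.sum_erase_eq_sub (Finset.mem_univ _),
    sum_norm_charSum_sq, sum_norm_charSum_pow_four_mul_re hmem, charSum_zero] at hsum
  have hpos : 0 < s ^ 3 / n * s ^ 2 := by positivity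
  have heq : s ^ 3 / n * (n * s) = s ^ 4 := by field_simp
  simp only [Complex.norm_natCast, AddChar.zero_apply, Complex.one_re, mul_sub] at hsum
  linarith

end Bogolyubov

theorem exists_finset_zmod_forall_mem_add_sub_sub {N : ℕ} [NeZero N] {S : Finset (ZMod N)}
    (hS : S.Nonempty) :
    ∃ Γ : Finset (ZMod N), (Γ.card : ℝ) * S.card ^ 2 ≤ N ^ 2 ∧
      ∀ x, (∀ r ∈ Γ, 0 ≤ (ZMod.stdAddChar (r * x)).re) → x ∈ S + S - S - S := by
  refine ⟨(largeSpectrum S).map AddChar.zmodAddEquiv.symm.toEquiv.toEmbedding, ?_, fun x hx ↦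
    mem_add_sub_sub_of_forall_largeSpectrum hS fun χ hχ ↦ ?_⟩
  · simpa [ZMod.card] using card_largeSpectrum_mul_sq_le hS
  · obtain ⟨r, rfl⟩ := AddChar.zmodAddEquiv.surjective χ
    exact hx r (Finset.mem_map.mpr ⟨_, hχ, AddChar.zmodAddEquiv.symm_apply_apply r⟩)

/-! ### Ruzsa's model lemma -/

theorem card_filter_dvd_mul_emod_le {p : ℕ} (hp : p.Prime) {x : ℤ} (hx : ¬(p : ℤ) ∣ x) (N : ℕ) :
    {l ∈ Finset.Ioc 0 (p - 1) | (N : ℤ) ∣ ((l : ℕ) * x) % p}.card ≤ (p - 1) / N := by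
  have hpos : (0 : ℤ) < p := mod_cast hp.pos
  have hdvd {n : ℤ} (h : (p : ℤ) ∣ n * x) : (p : ℤ) ∣ n :=
    ((Nat.prime_iff_prime_int.mp hp).dvd_or_dvd h).resolve_right hx
  have hnonneg (l : ℕ) : 0 ≤ (l * x) % p := Int.emod_nonneg _ hpos.ne'
  rw [← Nat.Ioc_filter_dvd_card_eq_div]
  refine Finset.card_le_card_of_injOn (fun l ↦ ((l * x) % p).toNat) (fun l hl ↦ ?_)
    fun l hl l' hl' h ↦ ?_
  · simp only [Finset.coe_filter, Finset.mem_Ioc, Set.mem_ofPred_eq] at hl ⊢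
    have hlt := Int.emod_lt_of_pos (l * x) hpos
    have hne : (l * x) % p ≠ 0 := fun h0 ↦ by
      have := Nat.le_of_dvd hl.1.1 (Int.natCast_dvd_natCast.mp (hdvd (Int.dvd_of_emod_eq_zero h0)))
      omega
    have := hnonneg l
    exact ⟨by omega, by rw [← Int.natCast_dvd_natCast, Int.toNat_of_nonneg (hnonneg l)]; exact hl.2⟩
  · simp only [Finset.coe_filter, Finset.mem_Ioc, Set.mem_ofPred_eq] at hl hl' h
    have hmod : (l * x) % p = (l' * x) % p := by have := hnonneg l; have := hnonneg l'; omega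
    have : (p : ℤ) ∣ l - l' := hdvd (by rw [sub_mul]; exact Int.ModEq.dvd hmod.symm)
    have := Int.eq_zero_of_abs_lt_dvd this (by rw [abs_lt]; omega)
    omega

theorem exists_forall_not_dvd_mul_emod {D : Finset ℤ} (hD : 0 ∉ D) {N : ℕ} (hN : D.card < N) :
    ∃ p l : ℤ, 0 < p ∧ ∀ x ∈ D, ¬(N : ℤ) ∣ (l * x) % p := by
  obtain ⟨p, hpM, hp⟩ := Nat.exists_infinite_primes (D.sup Int.natAbs + 1)
  have hndvd : ∀ x ∈ D, ¬(p : ℤ) ∣ x := fun x hx hdvd ↦ by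
    have hle := Nat.le_of_dvd (Int.natAbs_pos.mpr (ne_of_mem_of_not_mem hx hD))
      (Int.natCast_dvd.mp hdvd)
    have := Finset.le_sup (f := Int.natAbs) hx
    omega
  set bad : ℤ → Finset ℕ := fun x ↦ {l ∈ Finset.Ioc 0 (p - 1) | (N : ℤ) ∣ ((l : ℕ) * x) % p}
  have hbad : (D.biUnion bad).card < (Finset.Ioc 0 (p - 1)).card := by
    have hcard : (D.biUnion bad).card ≤ D.card * ((p - 1) / N) :=
      Finset.card_biUnion_le_card_mul _ _ _ fun x hx ↦ card_filter_dvd_mul_emod_le hp (hndvd x hx) N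
    have hdiv : N * ((p - 1) / N) ≤ p - 1 := Nat.mul_div_le _ _
    have := hp.two_le
    rw [Nat.card_Ioc]
    rcases Nat.eq_zero_or_pos ((p - 1) / N) with h | h
    · rw [h] at hcard; omega
    · have := Nat.mul_lt_mul_of_pos_right hN h
      omega
  obtain ⟨l, hl, hlbad⟩ := Finset.exists_mem_notMem_of_card_lt_card hbad
  exact ⟨p, l, mod_cast hp.pos, fun x hx hdvd ↦
    hlbad (Finset.mem_biUnion.mpr ⟨x, hx, Finset.mem_filter.mpr ⟨hl, hdvd⟩⟩)⟩

theorem multiset_sum_mem_card_nsmul {M : Type*} [AddCommMonoid M] [DecidableEq M] {A : Finset M}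
    {s : Multiset M} (hs : ∀ x ∈ s, x ∈ A) : s.sum ∈ s.card • A := by
  induction s using Multiset.induction with
  | empty => simp
  | cons a s ih =>
    rw [Multiset.sum_cons, Multiset.card_cons, succ_nsmul']
    exact Finset.add_mem_add (hs a (by simp)) (ih fun x hx ↦ hs x (by simp [hx]))

theorem multiset_sum_ediv_eq_of_forall_card_mul_ediv_eq {p j : ℤ} (hp : 0 < p) {s : Multiset ℤ}
    (hs : s ≠ 0) (h : ∀ v ∈ s, (s.card * v) / p = j) : s.sum / p = j := by
  have hcard : (0 : ℤ) < s.card := mod_cast Multiset.card_pos.mpr hs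
  have hcell : ∀ v ∈ s, j * p ≤ s.card * v ∧ s.card * v ≤ j * p + p - 1 := fun v hv ↦ by
    have := (Int.ediv_eq_iff_of_pos hp).mp (h v hv)
    omega
  have hsum : (s.map ((s.card : ℤ) * ·)).sum = s.card * s.sum := by
    simpa using Multiset.sum_map_mul_left (s := s) (a := (s.card : ℤ)) (f := id)
  have hlower : s.card * (j * p) ≤ s.card * s.sum := by
    rw [← hsum]
    simpa using Multiset.card_nsmul_le_sum (s := s.map ((s.card : ℤ) * ·)) (a := j * p)
      (by simpa using fun v hv ↦ (hcell v hv).1)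
  have hupper : s.card * s.sum ≤ s.card * (j * p + p - 1) := by
    rw [← hsum]
    simpa using Multiset.sum_le_card_nsmul (s.map ((s.card : ℤ) * ·)) (j * p + p - 1)
      (by simpa using fun v hv ↦ (hcell v hv).2)
  have := le_of_mul_le_mul_left hlower hcard
  have := le_of_mul_le_mul_left hupper hcard
  rw [Int.ediv_eq_iff_of_pos hp]
  omega

theorem mul_sub_emod_eq_sum_map_sub_sum_map {p l j : ℤ} (hp : 0 < p) {s t : Multiset ℤ}
    (hs : (s.map fun a ↦ l * a % p).sum / p = j) (ht : (t.map fun a ↦ l * a % p).sum / p = j)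
    (hle : (t.map fun a ↦ l * a % p).sum ≤ (s.map fun a ↦ l * a % p).sum) :
    l * (s.sum - t.sum) % p = (s.map fun a ↦ l * a % p).sum - (t.map fun a ↦ l * a % p).sum := by
  have hmod (u : Multiset ℤ) : (l * u.sum) % p = (u.map fun a ↦ l * a % p).sum % p := by
    have : l * u.sum = (u.map (l * ·)).sum := by
      simpa using (Multiset.sum_map_mul_left (s := u) (a := l) (f := id)).symm
    rw [this, Multiset.sum_int_mod, Multiset.map_map, Function.comp_def]
  rw [mul_sub, Int.sub_emod, hmod, hmod, ← Int.sub_emod]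
  have := (Int.ediv_eq_iff_of_pos hp).mp hs
  have := (Int.ediv_eq_iff_of_pos hp).mp ht
  exact Int.emod_eq_of_lt (by omega) (by omega)

-- Confining the residues to one of `k` cells of `[0, p)` puts every sum of `k` of them in the same
-- period, so that no wrap-around modulo `p` occurs when two such sums are subtracted.
theorem isAddFreimanIso_intCast_mul_emod {k N : ℕ} {p l j : ℤ} {A : Finset ℤ} (hp : 0 < p)
    (hk : k ≠ 0) (hl : ∀ x ∈ (k • A - k • A).erase 0, ¬(N : ℤ) ∣ (l * x) % p)
    (hA : ∀ a ∈ A, (k * (l * a % p)) / p = j) :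
    IsAddFreimanIso k A ((fun a : ℤ ↦ ((l * a % p : ℤ) : ZMod N)) '' A)
      fun a ↦ ((l * a % p : ℤ) : ZMod N) := by
  have hsum : ∀ s t : Multiset ℤ, (∀ x ∈ s, x ∈ A) → (∀ x ∈ t, x ∈ A) → s.card = k → t.card = k →
      ((s.map fun a ↦ ((l * a % p : ℤ) : ZMod N)).sum =
        (t.map fun a ↦ ((l * a % p : ℤ) : ZMod N)).sum ↔ s.sum = t.sum) := by
    intro s t hsA htA hs ht
    wlog hle : (t.map fun a ↦ l * a % p).sum ≤ (s.map fun a ↦ l * a % p).sum generalizing s t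
    · rw [eq_comm, this t s htA hsA ht hs (le_of_not_ge hle), eq_comm]
    have hcell (u : Multiset ℤ) (huA : ∀ x ∈ u, x ∈ A) (hu : u.card = k) :
        (u.map fun a ↦ l * a % p).sum / p = j := by
      refine multiset_sum_ediv_eq_of_forall_card_mul_ediv_eq hp ?_ ?_
      · rw [← Multiset.card_pos, Multiset.card_map, hu]; exact hk.bot_lt
      · simpa [hu] using fun a ha ↦ hA a (huA a ha)
    have hdiff := mul_sub_emod_eq_sum_map_sub_sum_map hp (hcell s hsA hs) (hcell t htA ht) hle
    have hcast (u : Multiset ℤ) : (u.map fun a ↦ ((l * a % p : ℤ) : ZMod N)).sum =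
        ((u.map fun a ↦ l * a % p).sum : ℤ) := by
      rw [Int.cast_multiset_sum, Multiset.map_map, Function.comp_def]
    rw [hcast, hcast, eq_comm, ZMod.intCast_eq_intCast_iff_dvd_sub, ← hdiff]
    refine ⟨fun hdvd ↦ ?_, fun h ↦ by simp [h]⟩
    by_contra hne
    exact hl _ (Finset.mem_erase.mpr ⟨sub_ne_zero.mpr hne, Finset.sub_mem_sub
      (hs ▸ multiset_sum_mem_card_nsmul hsA) (ht ▸ multiset_sum_mem_card_nsmul htA)⟩) hdvd
  refine ⟨Set.InjOn.bijOn_image fun a ha b hb hab ↦ ?_, fun s t hsA htA ↦ hsum s t hsA htA⟩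
  have := (hsum (.replicate k a) (.replicate k b)
    (fun x hx ↦ Multiset.eq_of_mem_replicate hx ▸ ha)
    (fun x hx ↦ Multiset.eq_of_mem_replicate hx ▸ hb) (by simp) (by simp)).mp (by simp_all)
  simpa [hk] using this

theorem exists_subset_isAddFreimanIso_zmod {A : Finset ℤ} (hA : A.Nonempty) {k N : ℕ} (hk : k ≠ 0)
    (hN : (k • A - k • A).card ≤ N) :
    ∃ A₁ ⊆ A, A.card ≤ k * A₁.card ∧ ∃ ψ : ℤ → ZMod N, IsAddFreimanIso k A₁ (ψ '' A₁) ψ := by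
  have hzero : (0 : ℤ) ∈ k • A - k • A := Finset.zero_mem_sub_iff.mpr
    (Finset.not_disjoint_iff_nonempty_inter.mpr (by simpa using hA.nsmul))
  obtain ⟨p, l, hp, hl⟩ := exists_forall_not_dvd_mul_emod (Finset.notMem_erase 0 (k • A - k • A))
    ((Finset.card_erase_lt_of_mem hzero).trans_le hN)
  have hmaps : ∀ a ∈ A, (k * (l * a % p)) / p ∈ Finset.Ico (0 : ℤ) k := fun a _ ↦ by
    have := Int.emod_nonneg (l * a) hp.ne'
    have := Int.emod_lt_of_pos (l * a) hp
    rw [Finset.mem_Ico, Int.ediv_lt_iff_lt_mul hp]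
    exact ⟨by positivity, by gcongr⟩
  obtain ⟨j, -, hj⟩ := Finset.exists_le_card_fiber_of_nsmul_le_card_of_maps_to (M := ℚ)
    (b := A.card / k) hmaps (by simpa using hk.bot_lt) (by simp [field])
  refine ⟨{a ∈ A | (k * (l * a % p)) / p = j}, Finset.filter_subset _ _, ?_, _,
    isAddFreimanIso_intCast_mul_emod hp hk (fun x hx ↦ hl x ?_)
      fun a ha ↦ (Finset.mem_filter.mp ha).2⟩
  · rw [div_le_iff₀' (by positivity)] at hj
    exact_mod_cast hj
  · have hsub : {a ∈ A | (k * (l * a % p)) / p = j} ⊆ A := Finset.filter_subset _ _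
    exact Finset.erase_subset_erase 0 (by gcongr) hx

/-! ### Extending a Freiman isomorphism to differences -/

section FreimanIso

variable {G H : Type*} [AddCommGroup H] {A : Set G} {ψ : G → H}

/-- The element `f a + f b - f c - f d` of the iterated difference set `2f(A) - 2f(A)` represented
by the quadruple `(a, b, c, d)`. -/
def quadSum (f : G → H) (x : G × G × G × G) : H :=
  f x.1 + f x.2.1 - f x.2.2.1 - f x.2.2.2

theorem quadSum_self (f : G → H) (a : G) : quadSum f (a, a, a, a) = 0 := by
  simp [quadSum]

theorem exists_quadSum_eq_of_mem {u : H} (hu : u ∈ ψ '' A + ψ '' A - ψ '' A - ψ '' A) :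
    ∃ x ∈ A ×ˢ A ×ˢ A ×ˢ A, quadSum ψ x = u := by
  obtain ⟨_, ⟨_, ⟨_, ⟨a, ha, rfl⟩, _, ⟨b, hb, rfl⟩, rfl⟩, _, ⟨c, hc, rfl⟩, rfl⟩, _, ⟨d, hd, rfl⟩,
    rfl⟩ := hu
  exact ⟨(a, b, c, d), ⟨ha, hb, hc, hd⟩, rfl⟩

theorem quadSum_add_quadSum_eq_iff (f : G → H) (x y z : G × G × G × G) :
    quadSum f x + quadSum f y = quadSum f z ↔
      f x.1 + (f x.2.1 + (f y.1 + (f y.2.1 + (f z.2.2.1 + f z.2.2.2)))) =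
        f x.2.2.1 + (f x.2.2.2 + (f y.2.2.1 + (f y.2.2.2 + (f z.1 + f z.2.1)))) := by
  rw [← sub_eq_zero, ← sub_eq_zero (b := f x.2.2.1 + _)]
  exact Eq.congr_left (by simp only [quadSum]; abel)

variable [AddCommGroup G]

theorem quadSum_add_quadSum_eq_iff_of_isAddFreimanIso (hψ : IsAddFreimanIso 6 A (ψ '' A) ψ)
    {x y z : G × G × G × G} (hx : x ∈ A ×ˢ A ×ˢ A ×ˢ A) (hy : y ∈ A ×ˢ A ×ˢ A ×ˢ A)
    (hz : z ∈ A ×ˢ A ×ˢ A ×ˢ A) :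
    quadSum ψ x + quadSum ψ y = quadSum ψ z ↔ quadSum id x + quadSum id y = quadSum id z := by
  simp only [Set.mem_prod] at hx hy hz
  rw [quadSum_add_quadSum_eq_iff, quadSum_add_quadSum_eq_iff]
  simpa using hψ.map_sum_eq_map_sum (s := {x.1, x.2.1, y.1, y.2.1, z.2.2.1, z.2.2.2})
    (t := {x.2.2.1, x.2.2.2, y.2.2.1, y.2.2.2, z.1, z.2.1})
    (by simp [hx, hy, hz]) (by simp [hx, hy, hz]) (by simp) (by simp)

theorem exists_isAddHomOn_of_isAddFreimanIso (hψ : IsAddFreimanIso 6 A (ψ '' A) ψ) :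
    ∃ θ : H → G, (∀ x ∈ A ×ˢ A ×ˢ A ×ˢ A, θ (quadSum ψ x) = quadSum id x) ∧
      IsAddHomOn (ψ '' A + ψ '' A - ψ '' A - ψ '' A) θ ∧
      ∀ u ∈ ψ '' A + ψ '' A - ψ '' A - ψ '' A, θ u = 0 → u = 0 := by
  have hfactor : (fun x : ↥(A ×ˢ A ×ˢ A ×ˢ A) ↦ quadSum id (x : G × G × G × G)).FactorsThrough
      fun x ↦ quadSum ψ x := by
    rintro ⟨x, hx⟩ ⟨y, hy⟩ hxy
    have := quadSum_add_quadSum_eq_iff_of_isAddFreimanIso hψ hx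
      (⟨hx.1, hx.1, hx.1, hx.1⟩ : (x.1, x.1, x.1, x.1) ∈ A ×ˢ A ×ˢ A ×ˢ A) hy
    simpa only [quadSum_self, add_zero] using this.mp (by simpa only [quadSum_self, add_zero])
  have hθ : ∀ x ∈ A ×ˢ A ×ˢ A ×ˢ A, Function.extend (fun x : ↥(A ×ˢ A ×ˢ A ×ˢ A) ↦ quadSum ψ x)
      (fun x ↦ quadSum id (x : G × G × G × G)) 0 (quadSum ψ x) = quadSum id x :=
    fun x hx ↦ hfactor.extend_apply 0 ⟨x, hx⟩
  refine ⟨_, hθ, fun u hu v hv huv ↦ ?_, fun u hu hu0 ↦ ?_⟩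
  · obtain ⟨x, hx, rfl⟩ := exists_quadSum_eq_of_mem hu
    obtain ⟨y, hy, rfl⟩ := exists_quadSum_eq_of_mem hv
    obtain ⟨z, hz, hxyz⟩ := exists_quadSum_eq_of_mem huv
    rw [← hxyz, hθ x hx, hθ y hy, hθ z hz]
    exact ((quadSum_add_quadSum_eq_iff_of_isAddFreimanIso hψ hx hy hz).mp hxyz.symm).symm
  · obtain ⟨x, hx, rfl⟩ := exists_quadSum_eq_of_mem hu
    rw [hθ x hx] at hu0
    have := (quadSum_add_quadSum_eq_iff_of_isAddFreimanIso hψ hx hx hx).mpr (by simp [hu0])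
    simpa using this

end FreimanIso

/-! ### The lattice of a Bohr set -/

theorem re_stdAddChar_intCast_nonneg {N : ℕ} [NeZero N] {t : ℤ} (ht : ‖t‖ ≤ N / 4) :
    0 ≤ (ZMod.stdAddChar (t : ZMod N)).re := by
  have hN : (0 : ℝ) < N := mod_cast NeZero.pos N
  have hexp : 2 * (Real.pi : ℂ) * Complex.I * t / N =
      ((2 * Real.pi * t / N : ℝ) : ℂ) * Complex.I := by push_cast; ring
  obtain ⟨hlower, hupper⟩ := abs_le.mp (Int.norm_eq_abs t ▸ ht)
  rw [ZMod.stdAddChar_coe, hexp, Complex.exp_ofReal_mul_I_re]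
  apply Real.cos_nonneg_of_neg_pi_div_two_le_of_le
  · rw [le_div_iff₀ hN]; nlinarith [Real.pi_pos]
  · rw [div_le_iff₀ hN]; nlinarith [Real.pi_pos]

theorem exists_subset_forall_norm_sub_le {α ι : Type*} [Fintype ι] {A : Finset α}
    {v : α → ι → ℤ} {L q : ℕ} (hq : q ≠ 0) (hv : ∀ a ∈ A, ∀ i, v a i ∈ Finset.Ico (0 : ℤ) L) :
    ∃ A' ⊆ A, A.card ≤ q ^ Fintype.card ι * A'.card ∧
      ∀ a ∈ A', ∀ b ∈ A', ‖v a - v b‖ ≤ L / q := by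
  classical
  have hmaps : ∀ a ∈ A, (fun i ↦ (q * v a i) / L) ∈
      Fintype.piFinset fun _ : ι ↦ Finset.Ico (0 : ℤ) q := fun a ha ↦ by
    rw [Fintype.mem_piFinset]
    intro i
    obtain ⟨hnonneg, hlt⟩ := Finset.mem_Ico.mp (hv a ha i)
    rw [Finset.mem_Ico, Int.ediv_lt_iff_lt_mul (hnonneg.trans_lt hlt)]
    exact ⟨by positivity, by gcongr⟩
  obtain ⟨j, -, hj⟩ := Finset.exists_le_card_fiber_of_nsmul_le_card_of_maps_to (M := ℚ)
    (b := A.card / q ^ Fintype.card ι) hmaps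
    (by rw [Fintype.piFinset_nonempty]; simpa using fun _ ↦ hq.bot_lt) (by simp [field])
  refine ⟨{a ∈ A | (fun i ↦ (q * v a i) / L) = j}, Finset.filter_subset _ _, ?_,
    fun a ha b hb ↦ ?_⟩
  · rw [div_le_iff₀' (by positivity)] at hj
    exact_mod_cast hj
  obtain ⟨haA, rfl⟩ := Finset.mem_filter.mp ha
  obtain ⟨-, hba⟩ := Finset.mem_filter.mp hb
  refine (pi_norm_le_iff_of_nonneg (by positivity)).mpr fun i ↦ ?_
  obtain ⟨hnonneg, hlt⟩ := Finset.mem_Ico.mp (hv a haA i)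
  have hL := hnonneg.trans_lt hlt
  have hcell (x : ℤ) := (Int.ediv_eq_iff_of_pos (x := x) (y := (q * v a i) / L) hL).mp
  have h₁ := hcell _ rfl
  have h₂ := hcell _ (congrFun hba i)
  have : |q * (v a i - v b i)| ≤ L := by rw [abs_le, mul_sub]; omega
  rw [Pi.sub_apply, Int.norm_eq_abs, le_div_iff₀' (by positivity), ← Nat.abs_cast q, ← abs_mul]
  exact_mod_cast this

section BohrLattice

variable {ι : Type*} {N : ℕ}

/-- The lattice of integer vectors congruent modulo `N` to some multiple `x • r` of `r`. Its short
vectors lift the elements `x` of the Bohr set with frequencies `r`. -/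
def bohrLattice (r : ι → ZMod N) : AddSubgroup (ι → ℤ) where
  carrier := {y | ∃ x : ZMod N, ∀ i, (y i : ZMod N) = r i * x}
  add_mem' := by
    rintro y y' ⟨x, hx⟩ ⟨x', hx'⟩
    exact ⟨x + x', fun i ↦ by simp [hx i, hx' i, mul_add]⟩
  zero_mem' := ⟨0, fun i ↦ by simp⟩
  neg_mem' := by
    rintro y ⟨x, hx⟩
    exact ⟨-x, fun i ↦ by simp [hx i]⟩

/-- Reduction modulo `N` of the `i₀`-th coordinate on the Bohr lattice. When `r i₀ = 1` it recovers
the multiplier `x` of a lattice vector. -/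
def bohrLatticeCoord (r : ι → ZMod N) (i₀ : ι) : bohrLattice r →+ ZMod N :=
  (Int.castAddHom (ZMod N)).comp ((Pi.evalAddMonoidHom _ i₀).comp (bohrLattice r).subtype)

/-- The vector of the Bohr lattice over `x` with coordinates in `[0, N)`. -/
def bohrLatticeLift [NeZero N] (r : ι → ZMod N) (x : ZMod N) : bohrLattice r :=
  ⟨fun i ↦ (r i * x).val, x, fun i ↦ by simp⟩

variable {r : ι → ZMod N} {i₀ : ι}

theorem bohrLatticeCoord_apply (y : bohrLattice r) :
    bohrLatticeCoord r i₀ y = ((y : ι → ℤ) i₀ : ZMod N) :=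
  rfl

theorem bohrLatticeCoord_bohrLatticeLift [NeZero N] (hr : r i₀ = 1) (x : ZMod N) :
    bohrLatticeCoord r i₀ (bohrLatticeLift r x) = x := by
  simp [bohrLatticeCoord_apply, bohrLatticeLift, hr]

theorem intCast_eq_mul_bohrLatticeCoord (hr : r i₀ = 1) (y : bohrLattice r) (i : ι) :
    (((y : ι → ℤ) i : ℤ) : ZMod N) = r i * bohrLatticeCoord r i₀ y := by
  obtain ⟨y, x, hx⟩ := y
  rw [bohrLatticeCoord_apply, hx i₀, hr, one_mul, hx i]

theorem bohrLatticeLift_apply_mem_Ico [NeZero N] (r : ι → ZMod N) (x : ZMod N) (i : ι) :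
    (bohrLatticeLift r x : ι → ℤ) i ∈ Finset.Ico (0 : ℤ) N :=
  Finset.mem_Ico.mpr ⟨Nat.cast_nonneg _, Int.ofNat_lt.mpr (ZMod.val_lt (r i * x))⟩

instance [Finite ι] : Module.Finite ℤ (bohrLattice r) :=
  .of_injective (bohrLattice r).subtype.toIntLinearMap Subtype.val_injective

variable [Fintype ι] {T : ℝ}

theorem finrank_bohrLattice_le : finrank ℤ (bohrLattice r) ≤ Fintype.card ι := by
  rw [← finrank_pi ℤ]
  exact LinearMap.finrank_le_finrank_of_injective (f := (bohrLattice r).subtype.toIntLinearMap)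
    Subtype.val_injective

theorem eq_zero_of_bohrLatticeCoord_eq_zero (hr : r i₀ = 1) (hT : T < N) {y : bohrLattice r}
    (hy : ‖y‖ ≤ T) (h : bohrLatticeCoord r i₀ y = 0) : y = 0 := by
  ext i
  have hdvd := intCast_eq_mul_bohrLatticeCoord hr y i
  rw [h, mul_zero, ZMod.intCast_zmod_eq_zero_iff_dvd] at hdvd
  have hlt : ‖(y : ι → ℤ) i‖ < N := ((norm_le_pi_norm _ i).trans hy).trans_lt hT
  rw [Int.norm_eq_abs] at hlt
  exact Int.eq_zero_of_abs_lt_dvd hdvd (mod_cast hlt)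

theorem injOn_bohrLatticeCoord (hr : r i₀ = 1) (hT : 2 * T < N) :
    Set.InjOn (bohrLatticeCoord r i₀) (closedBall 0 T) := fun y hy z hz hyz ↦ by
  rw [mem_closedBall_zero_iff] at hy hz
  exact sub_eq_zero.mp (eq_zero_of_bohrLatticeCoord_eq_zero hr hT
    ((norm_sub_le y z).trans (by linarith)) (by rw [map_sub, hyz, sub_self]))

theorem finite_closedBall_bohrLattice [NeZero N] (hr : r i₀ = 1) (hT : 2 * T < N) :
    (closedBall (0 : bohrLattice r) T).Finite :=
  (Set.toFinite _).of_finite_image (injOn_bohrLatticeCoord hr hT)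

theorem ncard_closedBall_bohrLattice_le [NeZero N] (hr : r i₀ = 1) (hT : 2 * T < N) :
    (closedBall (0 : bohrLattice r) T).ncard ≤ N := by
  rw [← (injOn_bohrLatticeCoord hr hT).ncard_image]
  simpa using Set.ncard_le_card (bohrLatticeCoord r i₀ '' closedBall 0 T)

theorem re_stdAddChar_mul_bohrLatticeCoord_nonneg [NeZero N] (hr : r i₀ = 1) {y : bohrLattice r}
    (hy : ‖y‖ ≤ N / 4) (i : ι) : 0 ≤ (ZMod.stdAddChar (r i * bohrLatticeCoord r i₀ y)).re := by
  rw [← intCast_eq_mul_bohrLatticeCoord hr]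
  exact re_stdAddChar_intCast_nonneg ((norm_le_pi_norm (y : ι → ℤ) i).trans hy)

end BohrLattice

theorem exists_subset_isOrderPresFreiman2Iso_of_bohr {ι : Type*} [Fintype ι] {N : ℕ} [NeZero N]
    {r : ι → ZMod N} {i₀ : ι} (hr : r i₀ = 1) {A : Finset ℤ} {ψ : ℤ → ZMod N}
    (hψ : IsAddFreimanIso 6 A (ψ '' A) ψ)
    (hbohr : ∀ x, (∀ i, 0 ≤ (ZMod.stdAddChar (r i * x)).re) →
      x ∈ ψ '' A + ψ '' A - ψ '' A - ψ '' A) :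
    ∃ A' ⊆ A, A.card ≤ (8 * (2 * Fintype.card ι + 1)) ^ Fintype.card ι * A'.card ∧
      ∃ φ : ℤ → ℤ, IsOrderPresFreiman2Iso A' φ ∧ ∀ a ∈ A', |φ a| ≤ Fintype.card ι * N := by
  have hN : (0 : ℝ) < N := mod_cast NeZero.pos N
  have hT : 2 * ((N : ℝ) / 4) < N := by linarith
  have : NormSMulClass ℤ (bohrLattice r) := ⟨fun n y ↦ norm_smul n (y : ι → ℤ)⟩
  obtain ⟨θ, hθψ, hθ, hθ0⟩ := exists_isAddHomOn_of_isAddFreimanIso hψ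
  have hmaps : Set.MapsTo (bohrLatticeCoord r i₀) (closedBall 0 (N / 4))
      (ψ '' A + ψ '' A - ψ '' A - ψ '' A) := fun y hy ↦
    hbohr _ (re_stdAddChar_mul_bohrLatticeCoord_nonneg hr (mem_closedBall_zero_iff.mp hy))
  obtain ⟨A', hA', hcard, hclose⟩ := exists_subset_forall_norm_sub_le
    (A := A) (v := fun a ↦ (bohrLatticeLift r (ψ a) : ι → ℤ)) (L := N)
    (q := 8 * (2 * Fintype.card ι + 1)) (by positivity)
    (fun a _ i ↦ bohrLatticeLift_apply_mem_Ico r (ψ a) i)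
  set R : ℝ := 2 * (N / (8 * (2 * Fintype.card ι + 1)))
  have hRT : (2 * (finrank ℤ (bohrLattice r) : ℝ) + 1) * R ≤ N / 4 :=
    calc (2 * (finrank ℤ (bohrLattice r) : ℝ) + 1) * R
      _ ≤ (2 * Fintype.card ι + 1) * R := by gcongr; exact finrank_bohrLattice_le
      _ = N / 4 := by simp only [R]; field
  have hlift : ∀ a ∈ A', ∀ b ∈ A', ∀ c ∈ A', ∀ d ∈ A', (θ ∘ bohrLatticeCoord r i₀)
      (bohrLatticeLift r (ψ a) + bohrLatticeLift r (ψ b) - bohrLatticeLift r (ψ c) -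
        bohrLatticeLift r (ψ d)) = a + b - c - d := fun a ha b hb c hc d hd ↦ by
    simpa [bohrLatticeCoord_bohrLatticeLift hr, quadSum] using
      hθψ (a, b, c, d) ⟨hA' ha, hA' hb, hA' hc, hA' hd⟩
  obtain ⟨φ, hφ, hbound⟩ := (hθ.comp_addMonoidHom _ hmaps).exists_isOrderPresFreiman2Iso
    (fun y hy hy0 ↦ eq_zero_of_bohrLatticeCoord_eq_zero hr (T := N / 4) (by linarith)
      (mem_closedBall_zero_iff.mp hy) (hθ0 _ (hmaps hy) hy0))
    (finite_closedBall_bohrLattice hr hT) (by positivity) hRT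
    (fun a ha b hb ↦ by simpa [R] using hclose a ha b hb) hlift
  refine ⟨A', hA', hcard, φ, hφ, fun a ha ↦ (hbound a ha).trans ?_⟩
  exact_mod_cast Nat.mul_le_mul finrank_bohrLattice_le (ncard_closedBall_bohrLattice_le hr hT)

theorem exists_subset_isOrderPresFreiman2Iso_of_isAddFreimanIso_zmod {N : ℕ} [NeZero N]
    {A : Finset ℤ} (hA : A.Nonempty) {ψ : ℤ → ZMod N} (hψ : IsAddFreimanIso 6 A (ψ '' A) ψ) {m : ℕ}
    (hm : N ^ 2 ≤ m * A.card ^ 2) :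
    ∃ A' ⊆ A, A.card ≤ (8 * (2 * (m + 1) + 1)) ^ (m + 1) * A'.card ∧
      ∃ φ : ℤ → ℤ, IsOrderPresFreiman2Iso A' φ ∧ ∀ a ∈ A', |φ a| ≤ (m + 1 : ℕ) * N := by
  classical
  obtain ⟨Γ, hΓ, hbohr⟩ := exists_finset_zmod_forall_mem_add_sub_sub (hA.image ψ)
  rw [Finset.card_image_of_injOn hψ.bijOn.injOn] at hΓ
  have hΓm : Γ.card ≤ m := by
    have : Γ.card * A.card ^ 2 ≤ m * A.card ^ 2 := le_trans (mod_cast hΓ) hm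
    exact Nat.le_of_mul_le_mul_right this (pow_pos hA.card_pos 2)
  have hcard : Fintype.card ↥(insert 1 Γ) ≤ m + 1 := by
    rw [Fintype.card_coe]
    exact (Finset.card_insert_le 1 Γ).trans (by gcongr)
  obtain ⟨A', hA', hA'card, φ, hφ, hbound⟩ := exists_subset_isOrderPresFreiman2Iso_of_bohr
    (r := ((↑) : ↥(insert 1 Γ) → ZMod N)) (i₀ := ⟨1, Finset.mem_insert_self 1 Γ⟩) rfl hψ
    (fun x hx ↦ by exact_mod_cast hbohr x fun r hr ↦ hx ⟨r, Finset.mem_insert_of_mem hr⟩)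
  refine ⟨A', hA', hA'card.trans ?_, φ, hφ, fun a ha ↦ (hbound a ha).trans (by gcongr)⟩
  gcongr
  omega

theorem exists_subset_isOrderPresFreiman2Iso_of_card_nsmul_sub_nsmul_le {A : Finset ℤ}
    (hA : A.Nonempty) {C m : ℕ} (hC : (6 • A - 6 • A).card ≤ C * A.card) (hm : (6 * C) ^ 2 ≤ m) :
    ∃ A' ⊆ A, A.card ≤ 6 * (8 * (2 * (m + 1) + 1)) ^ (m + 1) * A'.card ∧
      ∃ φ : ℤ → ℤ, IsOrderPresFreiman2Iso A' φ ∧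
        ∀ a ∈ A', |φ a| ≤ ((m + 1) * (C * A.card) : ℕ) := by
  have : NeZero (6 • A - 6 • A).card := ⟨(hA.nsmul.sub hA.nsmul).card_ne_zero⟩
  obtain ⟨A₁, hA₁, hA₁card, ψ, hψ⟩ :=
    exists_subset_isAddFreimanIso_zmod hA (k := 6) (by simp) le_rfl
  have hA₁ne : A₁.Nonempty := Finset.card_pos.mp (by have := hA.card_pos; omega)
  have hN : (6 • A - 6 • A).card ^ 2 ≤ m * A₁.card ^ 2 :=
    calc (6 • A - 6 • A).card ^ 2 ≤ (C * (6 * A₁.card)) ^ 2 := by gcongr; exact hC.trans (by gcongr)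
      _ = (6 * C) ^ 2 * A₁.card ^ 2 := by ring
      _ ≤ m * A₁.card ^ 2 := by gcongr
  obtain ⟨A', hA', hA'card, φ, hφ, hbound⟩ :=
    exists_subset_isOrderPresFreiman2Iso_of_isAddFreimanIso_zmod hA₁ne hψ hN
  refine ⟨A', hA'.trans hA₁, ?_, φ, hφ, fun a ha ↦ (hbound a ha).trans ?_⟩
  · calc A.card ≤ 6 * A₁.card := hA₁card
      _ ≤ 6 * ((8 * (2 * (m + 1) + 1)) ^ (m + 1) * A'.card) := by gcongr
      _ = 6 * (8 * (2 * (m + 1) + 1)) ^ (m + 1) * A'.card := by ring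
  · exact_mod_cast Nat.mul_le_mul_left (m + 1) hC

theorem card_nsmul_sub_nsmul_le_of_card_add_self_le {G : Type*} [AddCommGroup G] [DecidableEq G]
    {A : Finset G} (hA : A.Nonempty) {K : ℝ} (hK : ((A + A).card : ℝ) ≤ K * A.card) (m n : ℕ) :
    ((m • A - n • A).card : ℝ) ≤ K ^ (m + n) * A.card := by
  have hApos : (0 : ℝ) < A.card := mod_cast hA.card_pos
  calc ((m • A - n • A).card : ℝ)
    _ ≤ ((A + A).card / A.card : ℝ) ^ (m + n) * A.card := by
      simpa using (NNRat.cast_le (K := ℝ)).mpr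
        (Finset.pluennecke_ruzsa_inequality_nsmul_sub_nsmul_add hA A m n)
    _ ≤ K ^ (m + n) * A.card := by gcongr; rwa [div_le_iff₀ hApos]

/-- **Condensing Lemma.** For every `K > 0` there are constants `c₁, c₂ > 0` depending
only on `K` such that any finite nonempty `A ⊆ ℤ` with `|A+A| ≤ K|A|` has a subset
`A' ⊆ A` with `|A'| ≥ c₁|A|` admitting an order-preserving Freiman 2-isomorphism
`φ : A' → [-c₂|A'|, c₂|A'|] ∩ ℤ`. -/
theorem condensing_lemma :
    ∀ K : ℝ, 0 < K → ∃ c₁ c₂ : ℝ, 0 < c₁ ∧ 0 < c₂ ∧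
      ∀ A : Finset ℤ, A.Nonempty → ((A + A).card : ℝ) ≤ K * A.card →
        ∃ A' ⊆ A, c₁ * (A.card : ℝ) ≤ (A'.card : ℝ) ∧
          ∃ φ : ℤ → ℤ, IsOrderPresFreiman2Iso A' φ ∧
            ∀ a ∈ A', (|φ a| : ℝ) ≤ c₂ * (A'.card : ℝ) := by
  intro K hK
  set C : ℕ := ⌈K ^ 12⌉₊
  set m : ℕ := (6 * C) ^ 2
  set W : ℕ := 6 * (8 * (2 * (m + 1) + 1)) ^ (m + 1)
  have : (0 : ℝ) < C := mod_cast Nat.ceil_pos.mpr (by positivity)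
  refine ⟨1 / W, (m + 1) * (C * W), by positivity, by positivity, fun A hA hAA ↦ ?_⟩
  have hcard : (6 • A - 6 • A).card ≤ C * A.card := by
    have : ((6 • A - 6 • A).card : ℝ) ≤ C * A.card :=
      (card_nsmul_sub_nsmul_le_of_card_add_self_le hA hAA 6 6).trans (by
        gcongr; exact Nat.le_ceil _)
    exact_mod_cast this
  obtain ⟨A', hA', hA'card, φ, hφ, hbound⟩ :=
    exists_subset_isOrderPresFreiman2Iso_of_card_nsmul_sub_nsmul_le hA hcard le_rfl
  replace hA'card : (A.card : ℝ) ≤ W * A'.card := mod_cast hA'card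
  refine ⟨A', hA', ?_, φ, hφ, fun a ha ↦ ?_⟩
  · rwa [one_div_mul_eq_div, div_le_iff₀' (by positivity)]
  · calc (|φ a| : ℝ) ≤ (m + 1) * (C * A.card) := mod_cast hbound a ha
      _ ≤ (m + 1) * (C * (W * A'.card)) := by gcongr
      _ = (m + 1) * (C * W) * A'.card := by ring
end

section
/- For every real δ > 0 there exist constants c₀ > 0, c₁ > 0, and a positive integer N such that the following holds. If n > N and A ⊆ [1, n] ∩ ℤ with |A| ≥ δn, then there exists a subset A' ⊆ A with |A'| ≥ c₁·|A| and EI(A') ≥ c₀·|A|³. -/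
/-- Indexed energy of a finite set of integers: writing `A = {a₁ < a₂ < ⋯ < aₘ}`,
the number of quadruples of indices `(i,j,k,l)` with `aᵢ + aⱼ = aₖ + aₗ` and
`i + j = k + l`. -/
def indexedEnergy (A : Finset ℤ) : ℕ :=
  (Finset.univ.filter
    (fun q : Fin A.card × Fin A.card × Fin A.card × Fin A.card =>
      ((A.orderIsoOfFin rfl q.1 : ℤ) + (A.orderIsoOfFin rfl q.2.1 : ℤ) =
        (A.orderIsoOfFin rfl q.2.2.1 : ℤ) + (A.orderIsoOfFin rfl q.2.2.2 : ℤ)) ∧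
      ((q.1 : ℕ) + (q.2.1 : ℕ) = (q.2.2.1 : ℕ) + (q.2.2.2 : ℕ)))).card

/-! The indexed energy of `B` is the additive energy of the graph of its index function. If many
elements `b ∈ B` have index exactly `⌊b / L⌋`, a large part of that graph follows a line of slope
`1 / L`; such a set has a sumset of linear size, hence large additive energy by Cauchy–Schwarz.

To find `B`, run through `A` in increasing order and keep an element unless its index would exceed
`⌊a / L⌋`. A rejected element lies in the same block of length `L` as the last element kept before
it, whose index is then exactly `⌊b / L⌋`. The kept elements with a smaller index number at
most `n / L`, which is at most half of `A` once `L ≥ 2 / δ`. -/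

open Finset
open scoped Pointwise

section Index

variable {α : Type*} [LinearOrder α] {B : Finset α} {a b : α}

/-- The zero-based position of `a` in the increasing enumeration of `B`, or, when `a ∉ B`, the
position it would take if it were inserted. -/
def indexIn (B : Finset α) (a : α) : ℕ := #{b ∈ B | b < a}

lemma indexIn_strictMonoOn (B : Finset α) : StrictMonoOn (indexIn B) (B : Set α) := by
  intro a ha b _ hab
  refine card_lt_card (ssubset_iff_of_subset ?_ |>.2 ⟨a, ?_, ?_⟩)
  · exact monotone_filter_right B fun x _ hx => lt_trans hx hab
  · exact mem_filter.2 ⟨ha, hab⟩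
  · simp

lemma exists_indexIn_add_one_eq (h : 0 < indexIn B a) :
    ∃ b ∈ B, b < a ∧ indexIn B b + 1 = indexIn B a := by
  have hne : {b ∈ B | b < a}.Nonempty := card_pos.1 h
  obtain ⟨hbB, hba⟩ := mem_filter.1 (max'_mem _ hne)
  set b := {b ∈ B | b < a}.max' hne
  have hinsert : {x ∈ B | x < a} = insert b {x ∈ B | x < b} := by
    ext x
    simp only [mem_insert, mem_filter]
    constructor
    · rintro ⟨hx, hxa⟩
      exact (le_max' _ x (mem_filter.2 ⟨hx, hxa⟩)).eq_or_lt.imp_right fun hxb => ⟨hx, hxb⟩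
    · rintro (rfl | ⟨hx, hxb⟩)
      · exact ⟨hbB, hba⟩
      · exact ⟨hx, hxb.trans hba⟩
  refine ⟨b, hbB, hba, ?_⟩
  rw [indexIn, indexIn, hinsert, card_insert_of_notMem (by simp)]

lemma indexIn_orderEmbOfFin (B : Finset α) (i : Fin #B) :
    indexIn B (B.orderEmbOfFin rfl i) = i := by
  have hmap : {b ∈ B | b < B.orderEmbOfFin rfl i} =
      (Iio i).map (B.orderEmbOfFin rfl).toEmbedding := by
    ext x
    simp only [mem_filter, mem_map, mem_Iio]
    constructor
    · rintro ⟨hx, hxi⟩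
      obtain ⟨j, rfl⟩ : x ∈ Set.range (B.orderEmbOfFin rfl) := by rwa [range_orderEmbOfFin]
      exact ⟨j, (B.orderEmbOfFin rfl).lt_iff_lt.1 hxi, rfl⟩
    · rintro ⟨j, hj, rfl⟩
      exact ⟨orderEmbOfFin_mem B rfl j, (B.orderEmbOfFin rfl).lt_iff_lt.2 hj⟩
  rw [indexIn, hmap, card_map, Fin.card_Iio]

lemma indexIn_insert_of_le (hab : a ≤ b) : indexIn (insert b B) a = indexIn B a := by
  rw [indexIn, indexIn, filter_insert, if_neg hab.not_gt]

end Index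

section Greedy

variable {α : Type*} [LinearOrder α] {f : α → ℕ} {A B : Finset α} {L M : ℕ}

/-- `B` is the result of running through `A` in increasing order and keeping an element `a` unless
its index in the set kept so far would exceed `f a`. -/
structure IsGreedySubset (f : α → ℕ) (A B : Finset α) : Prop where
  subset : B ⊆ A
  indexIn_le : ∀ b ∈ B, indexIn B b ≤ f b
  lt_indexIn : ∀ a ∈ A, a ∉ B → f a < indexIn B a

/-- The elements of `B` whose index in `B` is exactly the value of `f`. -/
def aligned (f : α → ℕ) (B : Finset α) : Finset α := {b ∈ B | indexIn B b = f b}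

lemma aligned_subset (f : α → ℕ) (B : Finset α) : aligned f B ⊆ B := filter_subset _ _

lemma exists_isGreedySubset (f : α → ℕ) (A : Finset α) : ∃ B, IsGreedySubset f A B := by
  induction A using Finset.induction_on_max with
  | empty => exact ⟨∅, Subset.rfl, by simp, by simp⟩
  | insert a A ha ih =>
    obtain ⟨B, hBA, hle, hlt⟩ := ih
    by_cases hkeep : indexIn B a ≤ f a
    · refine ⟨insert a B, insert_subset_insert a hBA, ?_, ?_⟩
      · intro b hb
        obtain rfl | hb := mem_insert.1 hb
        · rwa [indexIn_insert_of_le le_rfl]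
        · rw [indexIn_insert_of_le (ha b (hBA hb)).le]
          exact hle b hb
      · intro x hx hxB
        obtain ⟨hxa, hxB⟩ := not_or.1 (mem_insert.not.1 hxB)
        have hxA : x ∈ A := mem_of_mem_insert_of_ne hx hxa
        rw [indexIn_insert_of_le (ha x hxA).le]
        exact hlt x hxA hxB
    · refine ⟨B, hBA.trans (subset_insert a A), hle, ?_⟩
      intro x hx hxB
      obtain rfl | hx := mem_insert.1 hx
      · exact not_le.1 hkeep
      · exact hlt x hx hxB

lemma IsGreedySubset.exists_aligned_eq (hB : IsGreedySubset f A B) (hf : Monotone f) {a : α}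
    (haA : a ∈ A) (haB : a ∉ B) : ∃ b ∈ aligned f B, f b = f a := by
  have hlt : f a < indexIn B a := hB.lt_indexIn a haA haB
  obtain ⟨b, hb, hba, hidx⟩ := exists_indexIn_add_one_eq (by omega : 0 < indexIn B a)
  have hle : indexIn B b ≤ f b := hB.indexIn_le b hb
  have hmono : f b ≤ f a := hf hba.le
  exact ⟨b, mem_filter.2 ⟨hb, by omega⟩, by omega⟩

lemma card_sdiff_aligned_le (hle : ∀ b ∈ B, indexIn B b ≤ f b) (hM : ∀ b ∈ B, f b ≤ M) :
    #(B \ aligned f B) ≤ M := by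
  have hmaps : ∀ b ∈ B \ aligned f B, indexIn B b ∈ range M := by
    intro b hb
    obtain ⟨hbB, hba⟩ := mem_sdiff.1 hb
    have hne : indexIn B b ≠ f b := fun h => hba (mem_filter.2 ⟨hbB, h⟩)
    exact mem_range.2 (((hle b hbB).lt_of_ne hne).trans_le (hM b hbB))
  have hinj : Set.InjOn (indexIn B) (B \ aligned f B : Finset α) :=
    (indexIn_strictMonoOn B).injOn.mono (coe_subset.2 sdiff_subset)
  simpa using card_le_card_of_injOn _ hmaps hinj

lemma IsGreedySubset.card_le (hB : IsGreedySubset f A B) (hf : Monotone f)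
    (hM : ∀ a ∈ A, f a ≤ M) (hfib : ∀ q, #{a ∈ A | f a = q} ≤ L) :
    #A ≤ M + L * #(aligned f B) := by
  set R := A \ (B \ aligned f B) with hR
  have himage : R.image f ⊆ (aligned f B).image f := by
    intro q hq
    obtain ⟨a, ha, rfl⟩ := mem_image.1 hq
    obtain ⟨haA, ha⟩ := mem_sdiff.1 ha
    by_cases haB : a ∈ B
    · exact mem_image_of_mem f (by_contra fun h => ha (mem_sdiff.2 ⟨haB, h⟩))
    · obtain ⟨b, hb, hba⟩ := hB.exists_aligned_eq hf haA haB
      exact mem_image.2 ⟨b, hb, hba⟩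
  have hcardR : #R ≤ L * #(aligned f B) := calc
    #R ≤ L * #(R.image f) := card_le_mul_card_image R L fun q _ =>
        (card_le_card (filter_subset_filter _ sdiff_subset)).trans (hfib q)
    _ ≤ L * #(aligned f B) := by
        gcongr
        exact (card_le_card himage).trans card_image_le
  calc #A = #(B \ aligned f B) + #R := by
        rw [hR, add_comm, card_sdiff_add_card_eq_card (sdiff_subset.trans hB.subset)]
    _ ≤ M + L * #(aligned f B) := add_le_add
        (card_sdiff_aligned_le hB.indexIn_le fun b hb => hM b (hB.subset hb)) hcardR

end Greedy

section Energy

/-- The graph `{(a, f a) | a ∈ S}` of the restriction of `f` to `S`, as in `Set.graphOn`. -/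
def finsetGraph {α β : Type*} [DecidableEq α] [DecidableEq β] (f : α → β) (S : Finset α) :
    Finset (α × β) := S.image fun a => (a, f a)

lemma card_finsetGraph {α β : Type*} [DecidableEq α] [DecidableEq β] (f : α → β)
    (S : Finset α) : #(finsetGraph f S) = #S :=
  card_image_of_injective S fun _ _ h => congrArg Prod.fst h

lemma finsetGraph_aligned_subset {α : Type*} [LinearOrder α] (f : α → ℕ) (B : Finset α) :
    finsetGraph f (aligned f B) ⊆ finsetGraph (indexIn B) B := by
  intro p hp
  obtain ⟨b, hb, rfl⟩ := mem_image.1 hp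
  obtain ⟨hbB, hidx⟩ := mem_filter.1 hb
  exact mem_image.2 ⟨b, hbB, by rw [hidx]⟩

lemma finsetGraph_indexIn {α : Type*} [LinearOrder α] (B : Finset α) :
    finsetGraph (indexIn B) B = univ.image fun i : Fin #B => (B.orderEmbOfFin rfl i, (i : ℕ)) := by
  calc finsetGraph (indexIn B) B
      = (univ.image (B.orderEmbOfFin rfl)).image fun b => (b, indexIn B b) := by
        rw [image_orderEmbOfFin_univ, finsetGraph]
    _ = univ.image fun i : Fin #B => (B.orderEmbOfFin rfl i, (i : ℕ)) := by
        simp only [image_image, Function.comp_def, indexIn_orderEmbOfFin]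

lemma indexedEnergy_eq_addEnergy (B : Finset ℤ) :
    indexedEnergy B = addEnergy (finsetGraph (indexIn B) B) (finsetGraph (indexIn B) B) := by
  let p : Fin #B → ℤ × ℕ := fun i => (B.orderEmbOfFin rfl i, i)
  have hp : Function.Injective p := fun i j h => Fin.ext (congrArg Prod.snd h)
  rw [finsetGraph_indexIn]
  refine card_nbij (fun q => ((p q.1, p q.2.2.1), (p q.2.1, p q.2.2.2))) ?_ ?_ ?_
  · rintro ⟨i, j, k, l⟩ hq
    simpa [p] using (mem_filter.1 hq).2
  · rintro ⟨i, j, k, l⟩ _ ⟨i', j', k', l'⟩ _ h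
    simp only [Prod.mk.injEq, hp.eq_iff] at h ⊢
    tauto
  · rintro ⟨⟨x, y⟩, z, w⟩ hx
    simp only [coe_filter, mem_product, mem_image, mem_univ, true_and, Set.mem_ofPred_eq] at hx
    obtain ⟨⟨⟨⟨i, rfl⟩, k, rfl⟩, ⟨j, rfl⟩, l, rfl⟩, hsum⟩ := hx
    exact ⟨(i, j, k, l), mem_filter.2 ⟨mem_univ _, by simpa using hsum⟩, rfl⟩

lemma card_aligned_pow_four_le (f : ℤ → ℕ) (B : Finset ℤ) :
    #(aligned f B) ^ 4 ≤
      #(finsetGraph f (aligned f B) + finsetGraph f (aligned f B)) * indexedEnergy B := by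
  set H := finsetGraph f (aligned f B) with hH
  have hsub : H ⊆ finsetGraph (indexIn B) B := finsetGraph_aligned_subset f B
  calc #(aligned f B) ^ 4 = #H ^ 2 * #H ^ 2 := by rw [hH, card_finsetGraph]; ring
    _ ≤ #(H + H) * addEnergy H H := le_card_add_mul_addEnergy H H
    _ ≤ #(H + H) * indexedEnergy B := by
        rw [indexedEnergy_eq_addEnergy]
        gcongr

end Energy

section Block

variable {m : ℤ} {n L : ℕ} {A S : Finset ℤ}

/-- The number `⌊(a - m) / L⌋` of the block containing `a` when `[m, ∞)` is cut into blocks of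
length `L`; everything below `m` is assigned to block `0`. -/
def blockIndex (m : ℤ) (L : ℕ) (a : ℤ) : ℕ := (a - m).toNat / L

lemma blockIndex_monotone (m : ℤ) (L : ℕ) : Monotone (blockIndex m L) := fun _ _ h =>
  Nat.div_le_div_right (Int.toNat_le_toNat (sub_le_sub_right h m))

lemma card_filter_blockIndex_eq_le (hL : 0 < L) (hA : ∀ a ∈ A, m ≤ a) (q : ℕ) :
    #{a ∈ A | blockIndex m L a = q} ≤ L := by
  have hsub : {a ∈ A | blockIndex m L a = q} ⊆ Ico (m + q * L) (m + q * L + L) := by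
    intro a ha
    obtain ⟨haA, hq⟩ := mem_filter.1 ha
    obtain ⟨hlo, hhi⟩ := (Nat.div_eq_iff hL).1 hq
    have hma : m ≤ a := hA a haA
    rw [mem_Ico]
    zify at hlo
    omega
  simpa using card_le_card hsub

/-- Given `a + b`, the sum of the two block indices takes at most two values, because
`⌊x⌋ + ⌊y⌋` is `⌊x + y⌋` or `⌊x + y⌋ - 1`. -/
lemma card_finsetGraph_blockIndex_add_self_le (hL : 0 < L) (hS : S ⊆ Ico m (m + n)) :
    #(finsetGraph (blockIndex m L) S + finsetGraph (blockIndex m L) S) ≤ 4 * n := by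
  have hsub : finsetGraph (blockIndex m L) S + finsetGraph (blockIndex m L) S ⊆
      (range (2 * n) ×ˢ range 2).image fun (s, ε) => (2 * m + s, s / L - ε) := by
    intro p hp
    obtain ⟨_, hu, _, hv, rfl⟩ := mem_add.1 hp
    obtain ⟨a, ha, rfl⟩ := mem_image.1 hu
    obtain ⟨b, hb, rfl⟩ := mem_image.1 hv
    obtain ⟨ha₀, ha₁⟩ := mem_Ico.1 (hS ha)
    obtain ⟨hb₀, hb₁⟩ := mem_Ico.1 (hS hb)
    obtain ⟨ε, hε, hdiv⟩ : ∃ ε < 2, ((a - m).toNat + (b - m).toNat) / L =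
        blockIndex m L a + blockIndex m L b + ε := by
      rw [Nat.add_div hL]
      exact ⟨_, by split_ifs <;> norm_num, rfl⟩
    refine mem_image.2 ⟨((a - m).toNat + (b - m).toNat, ε), ?_, Prod.ext ?_ ?_⟩
    · exact mem_product.2 ⟨mem_range.2 (by omega), mem_range.2 hε⟩
    · simp only [Prod.mk_add_mk]
      omega
    · simp only [Prod.mk_add_mk]
      omega
  calc _ ≤ #(range (2 * n) ×ˢ range 2) := (card_le_card hsub).trans card_image_le
    _ = 4 * n := by rw [card_product, card_range, card_range]; ring

end Block

lemma exists_subset_card_pow_three_le_indexedEnergy {m : ℤ} {n L : ℕ} (hL : 0 < L)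
    {A : Finset ℤ} (hA : A ⊆ Ico m (m + n)) (hn : 2 * n ≤ L * #A) :
    ∃ B ⊆ A, #A ≤ 2 * L * #B ∧ #A ^ 3 ≤ 32 * L ^ 5 * indexedEnergy B := by
  obtain ⟨B, hB⟩ := exists_isGreedySubset (blockIndex m L) A
  set k := #(aligned (blockIndex m L) B)
  have hkB : k ≤ #B := card_le_card (aligned_subset _ B)
  have hcover : #A ≤ n / L + L * k := by
    refine hB.card_le (blockIndex_monotone m L) (fun a ha => Nat.div_le_div_right ?_)
      (card_filter_blockIndex_eq_le hL fun a ha => (mem_Ico.1 (hA ha)).1)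
    have := mem_Ico.1 (hA ha)
    omega
  have hAk : #A ≤ 2 * L * k := by
    have hhalf : 2 * (n / L) ≤ #A := by
      refine Nat.le_of_mul_le_mul_left ?_ hL
      linarith [Nat.mul_div_le n L]
    linarith
  have henergy : k ^ 4 ≤ 4 * n * indexedEnergy B :=
    (card_aligned_pow_four_le _ B).trans <| Nat.mul_le_mul_right _ <|
      card_finsetGraph_blockIndex_add_self_le hL <|
        ((aligned_subset _ B).trans hB.subset).trans hA
  refine ⟨B, hB.subset, hAk.trans (by gcongr), ?_⟩
  obtain hA₀ | hA₀ := (#A).eq_zero_or_pos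
  · simp [hA₀]
  refine Nat.le_of_mul_le_mul_left ?_ hA₀
  calc #A * #A ^ 3 = #A ^ 4 := by ring
    _ ≤ (2 * L * k) ^ 4 := by gcongr
    _ = 16 * L ^ 4 * k ^ 4 := by ring
    _ ≤ 16 * L ^ 4 * (4 * n * indexedEnergy B) := by gcongr
    _ = 32 * L ^ 4 * (2 * n) * indexedEnergy B := by ring
    _ ≤ 32 * L ^ 4 * (L * #A) * indexedEnergy B := by gcongr
    _ = #A * (32 * L ^ 5 * indexedEnergy B) := by ring

theorem dense_interval_indexed_energy_general {δ : ℝ} (hδ : 0 < δ) {m : ℤ} {n : ℕ}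
    {A : Finset ℤ} (hA : A ⊆ Ico m (m + n)) (hcard : δ * n ≤ #A) :
    ∃ A' ⊆ A, δ / 6 * #A ≤ #A' ∧ (δ / 6) ^ 5 * (#A : ℝ) ^ 3 ≤ indexedEnergy A' := by
  obtain rfl | hA₀ := A.eq_empty_or_nonempty
  · exact ⟨∅, Subset.rfl, by simp⟩
  have hAn : (#A : ℝ) ≤ n := by exact_mod_cast (by simpa using card_le_card hA : #A ≤ n)
  have hn₀ : (0 : ℝ) < n := lt_of_lt_of_le (by exact_mod_cast hA₀.card_pos) hAn
  have hδ₁ : δ ≤ 1 := le_of_mul_le_mul_right (by linarith) hn₀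
  set L := ⌈2 / δ⌉₊
  have hL_pos : 0 < L := Nat.ceil_pos.2 (by positivity)
  have hL_ge : 2 ≤ L * δ := (div_le_iff₀ hδ).1 (Nat.le_ceil _)
  have hL_le : δ * L ≤ 3 := by
    have hceil : (L : ℝ) < 2 / δ + 1 := Nat.ceil_lt_add_one (by positivity)
    calc δ * L ≤ δ * (2 / δ + 1) := by gcongr
      _ = 2 + δ := by field_simp
      _ ≤ 3 := by linarith
  have hdense : 2 * (n : ℝ) ≤ L * #A := by
    calc 2 * (n : ℝ) ≤ L * δ * n := by gcongr
      _ = L * (δ * n) := by ring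
      _ ≤ L * #A := by gcongr
  obtain ⟨B, hBA, hsize, henergy⟩ :=
    exists_subset_card_pow_three_le_indexedEnergy hL_pos hA (by exact_mod_cast hdense)
  replace hsize : (#A : ℝ) ≤ 2 * L * #B := by exact_mod_cast hsize
  replace henergy : (#A : ℝ) ^ 3 ≤ 32 * L ^ 5 * indexedEnergy B := by exact_mod_cast henergy
  refine ⟨B, hBA, ?_, ?_⟩
  · calc δ / 6 * #A ≤ δ / 6 * (2 * L * #B) := by gcongr
      _ = δ * L / 3 * #B := by ring
      _ ≤ 3 / 3 * #B := by gcongr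
      _ = #B := by ring
  · calc (δ / 6) ^ 5 * (#A : ℝ) ^ 3 ≤ (δ / 6) ^ 5 * (32 * L ^ 5 * indexedEnergy B) := by gcongr
      _ = (δ * L / 3) ^ 5 * indexedEnergy B := by ring
      _ ≤ (3 / 3) ^ 5 * indexedEnergy B := by gcongr
      _ = indexedEnergy B := by ring

/-- For every `δ > 0` there are `c₀, c₁ > 0` and a positive integer `N` such that:
if `n > N` and `A ⊆ [1,n]` with `|A| ≥ δn`, then there is a subset `A' ⊆ A` with
`|A'| ≥ c₁|A|` and `EI(A') ≥ c₀|A|³`. -/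
theorem dense_interval_indexed_energy :
    ∀ δ : ℝ, 0 < δ → ∃ (c₀ c₁ : ℝ) (N : ℕ), 0 < c₀ ∧ 0 < c₁ ∧ 0 < N ∧
      ∀ n : ℕ, N < n → ∀ A : Finset ℤ, A ⊆ Finset.Icc 1 (n : ℤ) →
        δ * (n : ℝ) ≤ (A.card : ℝ) →
        ∃ A' ⊆ A, c₁ * (A.card : ℝ) ≤ (A'.card : ℝ) ∧
          c₀ * (A.card : ℝ) ^ 3 ≤ (indexedEnergy A' : ℝ) := by
  refine fun δ hδ => ⟨(δ / 6) ^ 5, δ / 6, 1, by positivity, by positivity, one_pos, ?_⟩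
  exact fun n _ A hA => dense_interval_indexed_energy_general (m := 1) (n := n) hδ
    (hA.trans fun a ha => mem_Ico.2 (by have := mem_Icc.1 ha; omega))
end
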